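/- Let (R,m) be an unmixed generalized Cohen-Macaulay local ring of dimension d > 0 and I a standard parameter ideal. Then for each fixed i ∈ {1,...,d}, depth R ≥ d - i + 1 if and only if eᵢ(I) = 0. -/

import Mathlib

open IsLocalRing Filter Function CategoryTheory

universe u

section Defs

variable (R : Type u) [CommRing R]

/-- The length of a module, as the Krull dimension of its lattice of submodules. -/
noncomputable def mlen (M : Type u) [AddCommGroup M] [Module R M] : WithBot ℕ∞ :=
  Order.krullDim (Submodule R M)

/-- The (Krull) dimension of a module. -/
noncomputable def mdim (M : Type u) [AddCommGroup M] [Module R M] : WithBot ℕ∞ :=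
  ringKrullDim (R ⧸ Module.annihilator R M)

/-- The depth of `M` with respect to an ideal `I`: the supremum of the lengths of
`M`-regular sequences consisting of elements of `I`. -/
noncomputable def idepth (I : Ideal R) (M : Type u) [AddCommGroup M] [Module R M] : ℕ∞ :=
  sSup {n : ℕ∞ | ∃ rs : List R, (rs.length : ℕ∞) = n ∧ (∀ r ∈ rs, r ∈ I) ∧
    RingTheory.Sequence.IsRegular M rs}

/-- The depth of a module over a local ring. -/
noncomputable def mdepth [IsLocalRing R] (M : Type u) [AddCommGroup M] [Module R M] : ℕ∞ :=
  idepth R (maximalIdeal R) M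

/-- A Cohen–Macaulay module over a local ring: depth = dimension. -/
def IsCMMod [IsLocalRing R] (M : Type u) [AddCommGroup M] [Module R M] : Prop :=
  (mdepth R M : WithBot ℕ∞) = mdim R M

/-- A Cohen–Macaulay local ring. -/
def IsCMRing [IsLocalRing R] : Prop := (mdepth R R : WithBot ℕ∞) = ringKrullDim R

/-- A maximal Cohen–Macaulay module: finite with depth = dim R. -/
def IsMCMMod [IsLocalRing R] (M : Type u) [AddCommGroup M] [Module R M] : Prop :=
  Module.Finite R M ∧ (mdepth R M : WithBot ℕ∞) = ringKrullDim R

/-- `H⁰_m(M)`: the submodule of elements killed by a power of the maximal ideal. -/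
def H0 [IsLocalRing R] (M : Type u) [AddCommGroup M] [Module R M] : Submodule R M :=
  ⨆ n : ℕ, Submodule.torsionBySet R M ((maximalIdeal R ^ n : Ideal R) : Set R)

/-- The `i`-th local cohomology of `M` with support in the maximal ideal. -/
noncomputable def lcoh [IsLocalRing R] (i : ℕ) (M : Type u) [AddCommGroup M] [Module R M] :
    ModuleCat.{u} R :=
  (localCohomology (maximalIdeal R) i).obj (ModuleCat.of R M)

/-- The value at `n` of the Hilbert–Samuel polynomial in dimension `d` with coefficients
`e 0, …, e d`:  `∑ (-1)^i eᵢ C(n+d-1-i, d-i)`. -/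
def hsPoly (d : ℕ) (e : ℕ → ℤ) (n : ℕ) : ℤ :=
  ∑ i ∈ Finset.range (d + 1), (-1 : ℤ) ^ i * e i * ((n + d - 1 - i).choose (d - i) : ℤ)

/-- `I` is a parameter ideal for `M` of dimension `d`: generated by `d` elements with
`M/IM` of finite length. -/
def IsParameterIdeal [IsLocalRing R] (I : Ideal R) (d : ℕ) (M : Type u) [AddCommGroup M]
    [Module R M] : Prop :=
  (∃ a : Fin d → R, I = Ideal.span (Set.range a)) ∧ mlen R (M ⧸ (I • (⊤ : Submodule R M))) < ⊤

/-- `ℓ` records the Hilbert–Samuel function of `I` on `M`:  `ℓ n = λ(M/IⁿM)`. -/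
def IsHilbSeq (I : Ideal R) (M : Type u) [AddCommGroup M] [Module R M] (ℓ : ℕ → ℕ) : Prop :=
  ∀ n : ℕ, mlen R (M ⧸ (I ^ n • (⊤ : Submodule R M))) = ((ℓ n : ℕ∞) : WithBot ℕ∞)

/-- `e 0, …, e d` are the Hilbert coefficients of `I` on `M`: the Hilbert–Samuel function
eventually agrees with the Hilbert–Samuel polynomial with these coefficients. -/
def HasHilbCoeffs (I : Ideal R) (M : Type u) [AddCommGroup M] [Module R M] (d : ℕ)
    (e : ℕ → ℤ) : Prop :=
  ∃ ℓ : ℕ → ℕ, IsHilbSeq R I M ℓ ∧ ∀ᶠ n in atTop, (ℓ n : ℤ) = hsPoly d e n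

/-- A local ring is unmixed if every associated prime of its completion has
dimension equal to `dim R`. -/
def Unmixed [IsLocalRing R] : Prop :=
  ∀ p ∈ associatedPrimes (AdicCompletion (maximalIdeal R) R)
      (AdicCompletion (maximalIdeal R) R),
    ringKrullDim ((AdicCompletion (maximalIdeal R) R) ⧸ p) = ringKrullDim R

/-- The height of an ideal: the infimum of the heights of the primes containing it. -/
noncomputable def idealHeight (I : Ideal R) : ℕ∞ :=
  ⨅ p ∈ {p : PrimeSpectrum R | I ≤ p.asIdeal}, Order.height p

/-- A regular local ring: the maximal ideal is generated by `dim R` elements. -/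
def IsRegularLocal [IsLocalRing R] : Prop :=
  ∃ s : Finset R, Ideal.span (s : Set R) = maximalIdeal R ∧
    ((s.card : ℕ∞) : WithBot ℕ∞) = ringKrullDim R

end Defs
/-- The binomial coefficient `C(i-1, j-1)` with the conventions `C(-1,-1) = 1` and
`C(i-1,-1) = 0` for `i ≥ 1`. -/
def bin (i j : ℕ) : ℕ :=
  if i = 0 then (if j = 0 then 1 else 0)
  else if j = 0 then 0 else (i - 1).choose (j - 1)

noncomputable section
open CategoryTheory Limits IsLocalRing
namespace LCB
variable {R : Type u} [CommRing R]

abbrev LY {X : ModuleCat.{u} R} (P : ProjectiveResolution X) (Y : ModuleCat.{u} R) :=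
  P.complex.linearYonedaObj R Y

/-- inclusion of cycles, with the right type -/
def iC {X : ModuleCat.{u} R} (P : ProjectiveResolution X) (Y : ModuleCat.{u} R) (n : ℕ) :
    (LY P Y).cycles n →ₗ[R] (P.complex.X n ⟶ Y) := ((LY P Y).iCycles n).hom

theorem iC_inj {X : ModuleCat.{u} R} (P : ProjectiveResolution X) (Y : ModuleCat.{u} R) (n : ℕ) :
    Function.Injective (iC P Y n) := (ModuleCat.mono_iff_injective ((LY P Y).iCycles n)).1 inferInstance

theorem cyc_cond {X : ModuleCat.{u} R} (P : ProjectiveResolution X) (Y : ModuleCat.{u} R) (n : ℕ)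
    (z : (LY P Y).cycles n) :
    P.complex.d (n+1) n ≫ iC P Y n z = 0 := by
  have := congrArg (fun f => f.hom z) ((LY P Y).iCycles_d n (n+1))
  exact this

/-- cocycles to the derived category Ext -/
def theta {X : ModuleCat.{u} R} (P : ProjectiveResolution X) (Y : ModuleCat.{u} R) (n : ℕ) :
    (LY P Y).cycles n →ₗ[R] Abelian.Ext.{u} X Y n where
  toFun z := P.extMk (iC P Y n z) (n+1) rfl (cyc_cond P Y n z)
  map_add' a b := by
    rw [P.add_extMk]
    congr 1
    exact map_add _ _ _
  map_smul' r a := by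
    rw [RingHom.id_apply, Abelian.Ext.smul_eq_comp_mk₀, P.extMk_comp_mk₀]
    congr 1
    rw [map_smul]
    rw [Linear.comp_smul, Category.comp_id]

theorem theta_apply {X : ModuleCat.{u} R} (P : ProjectiveResolution X) (Y : ModuleCat.{u} R) (n : ℕ)
    (z : (LY P Y).cycles n) : theta P Y n z = P.extMk (iC P Y n z) (n+1) rfl (cyc_cond P Y n z) := rfl

theorem theta_surj {X : ModuleCat.{u} R} (P : ProjectiveResolution X) (Y : ModuleCat.{u} R) (n : ℕ) :
    Function.Surjective (theta P Y n) := by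
  intro ξ
  obtain ⟨f, hf, rfl⟩ := P.extMk_surjective ξ (n+1) rfl
  let z : (LY P Y).cycles n := (LY P Y).cyclesMk (i := n) (f : P.complex.X n ⟶ Y) (n+1) (by simp) hf
  have hz : iC P Y n z = f := (LY P Y).i_cyclesMk (i := n) f (n + 1) (by simp) hf
  refine ⟨z, ?_⟩
  rw [theta_apply]
  congr 1

theorem homπ_zero {X : ModuleCat.{u} R} (P : ProjectiveResolution X) (Y : ModuleCat.{u} R) (n : ℕ)
    (z : (LY P Y).cycles (n+1)) : ((LY P Y).homologyπ (n+1)).hom z = 0 ↔ 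
      ∃ g : P.complex.X n ⟶ Y, P.complex.d (n+1) n ≫ g = iC P Y (n+1) z := by
  have hex : (ShortComplex.mk ((LY P Y).toCycles n (n+1)) ((LY P Y).homologyπ (n+1)) (by simp)).Exact :=
    ShortComplex.exact_of_g_is_cokernel _ ((LY P Y).homologyIsCokernel n (n+1) (by simp))
  rw [ShortComplex.moduleCat_exact_iff] at hex
  constructor
  · intro h
    obtain ⟨g, hg⟩ := hex z h
    refine ⟨g, ?_⟩
    have hg : ((LY P Y).toCycles n (n+1)).hom g = z := hg
    rw [← hg]
    have := congrArg (fun f => f.hom g) ((LY P Y).toCycles_i n (n+1))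
    exact this.symm
  · rintro ⟨g, hg⟩
    have h1 : ((LY P Y).toCycles n (n+1)).hom g = z := by
      apply iC_inj
      have := congrArg (fun f => f.hom g) ((LY P Y).toCycles_i n (n+1))
      exact this.trans hg
    rw [← h1]
    exact congrArg (fun f => f.hom g) ((LY P Y).toCycles_comp_homologyπ n (n+1))

theorem extMk_zero_deg {X : ModuleCat.{u} R} (P : ProjectiveResolution X) (Y : ModuleCat.{u} R)
    (f : P.complex.X 0 ⟶ Y) (hf : P.complex.d 1 0 ≫ f = 0) (h : P.extMk f 1 rfl hf = 0) : f = 0 := by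
  rw [← P.extEquivCohomologyClass.apply_eq_iff_eq,
    ProjectiveResolution.extEquivCohomologyClass_extMk, ProjectiveResolution.extEquivCohomologyClass_zero,
    CochainComplex.HomComplex.CohomologyClass.mk_eq_zero_iff,
    CochainComplex.HomComplex.Cocycle.toSingleMk_mem_coboundaries_iff _ _ _ _ _ 1 (by simp)] at h
  obtain ⟨g, hg⟩ := h
  have hz : IsZero (P.cochainComplex.X 1) := by
    apply HomologicalComplex.isZero_extend_X
    intro i; simp; lia
  have : g = 0 := hz.eq_of_src _ _
  rw [this, comp_zero] at hg
  rw [← cancel_epi (P.cochainComplexXIso (-(0:ℕ)) 0 rfl).hom, ← hg, comp_zero]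

theorem theta_ker {X : ModuleCat.{u} R} (P : ProjectiveResolution X) (Y : ModuleCat.{u} R) (n : ℕ)
    (z : (LY P Y).cycles n) : theta P Y n z = 0 ↔ ((LY P Y).homologyπ n).hom z = 0 := by
  rcases n with _ | n
  · have hinj : Function.Injective ((LY P Y).homologyπ 0).hom :=
        (ModuleCat.mono_iff_injective _).1 (by have := (LY P Y).isIso_homologyπ₀; infer_instance)
    constructor
    · intro h
      have := extMk_zero_deg P Y _ (cyc_cond P Y 0 z) h
      have : z = 0 := iC_inj P Y 0 (by rw [this, map_zero])
      rw [this, map_zero]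
    · intro h
      have : z = 0 := hinj (by rw [h, map_zero])
      rw [this, map_zero]
  · rw [homπ_zero, theta_apply]
    exact P.extMk_eq_zero_iff _ _ _ _ n rfl

/-- old Ext -/
abbrev OExt (X Y : ModuleCat.{u} R) (n : ℕ) : ModuleCat.{u} R := ((Ext R (ModuleCat.{u} R) n).obj (.op X)).obj Y

def rho {X : ModuleCat.{u} R} (P : ProjectiveResolution X) (Y : ModuleCat.{u} R) (n : ℕ) :
    (LY P Y).cycles n →ₗ[R] OExt X Y n := ((LY P Y).homologyπ n ≫ (P.isoExt n Y).inv).hom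

theorem rho_surj {X : ModuleCat.{u} R} (P : ProjectiveResolution X) (Y : ModuleCat.{u} R) (n : ℕ) :
    Function.Surjective (rho P Y n) := (ModuleCat.epi_iff_surjective ((LY P Y).homologyπ n ≫ (P.isoExt n Y).inv)).1 inferInstance

theorem rho_ker {X : ModuleCat.{u} R} (P : ProjectiveResolution X) (Y : ModuleCat.{u} R) (n : ℕ)
    (z : (LY P Y).cycles n) : theta P Y n z = 0 ↔ rho P Y n z = 0 := by
  rw [theta_ker]
  have hinj : Function.Injective (P.isoExt (R := R) n Y).inv.hom :=
        (ModuleCat.mono_iff_injective _).1 inferInstance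
  change _ ↔ (P.isoExt (R := R) n Y).inv.hom (((LY P Y).homologyπ n).hom z) = 0
  constructor
  · intro h; rw [h, map_zero]
  · intro h; apply hinj; rw [h, map_zero]

def extEquivAux {X : ModuleCat.{u} R} (P : ProjectiveResolution X) (Y : ModuleCat.{u} R) (n : ℕ) :
    OExt X Y n ≃ₗ[R] Abelian.Ext.{u} X Y n :=
  ((rho P Y n).quotKerEquivOfSurjective (rho_surj P Y n)).symm ≪≫ₗ
   (Submodule.quotEquivOfEq _ _ (by ext z; exact (rho_ker P Y n z).symm)) ≪≫ₗ
   ((theta P Y n).quotKerEquivOfSurjective (theta_surj P Y n))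

theorem extEquivAux_rho {X : ModuleCat.{u} R} (P : ProjectiveResolution X) (Y : ModuleCat.{u} R) (n : ℕ)
    (z : (LY P Y).cycles n) : extEquivAux P Y n (rho P Y n z) = theta P Y n z := by
  have : ((rho P Y n).quotKerEquivOfSurjective (rho_surj P Y n)).symm (rho P Y n z) = Submodule.Quotient.mk z := by
    rw [LinearEquiv.symm_apply_eq]; rfl
  simp only [extEquivAux, LinearEquiv.trans_apply, this]
  rfl

/-- chain map on linear Yoneda complexes -/
def LYmap {X X' : ModuleCat.{u} R} {P : ProjectiveResolution X} {P' : ProjectiveResolution X'} 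
    (φ : P'.complex ⟶ P.complex) (Y : ModuleCat.{u} R) : LY P Y ⟶ LY P' Y :=
  (HomologicalComplex.unopFunctor _ _).map ((((linearYoneda R (ModuleCat.{u} R)).obj Y).rightOp.mapHomologicalComplex _).map φ).op

theorem LYmap_iC {X X' : ModuleCat.{u} R} {P : ProjectiveResolution X} {P' : ProjectiveResolution X'} 
    (φ : P'.complex ⟶ P.complex) (Y : ModuleCat.{u} R) (n : ℕ) (z : (LY P Y).cycles n) :
    iC P' Y n ((HomologicalComplex.cyclesMap (LYmap φ Y) n).hom z) = φ.f n ≫ iC P Y n z := by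
  exact congrArg (fun f => f.hom z) (HomologicalComplex.cyclesMap_i (LYmap φ Y) n)

theorem rho_nat {X X' : ModuleCat.{u} R} {P : ProjectiveResolution X} {P' : ProjectiveResolution X'} 
    {g : X' ⟶ X} (φ : ProjectiveResolution.Hom P' P g) (Y : ModuleCat.{u} R) (n : ℕ) (z : (LY P Y).cycles n) :
    (((Ext R (ModuleCat.{u} R) n).map g.op).app Y).hom (rho P Y n z) =
      rho P' Y n ((HomologicalComplex.cyclesMap (LYmap φ.hom Y) n).hom z) := by
  have h1 : (P.isoExt n Y).inv ≫ ((Ext R (ModuleCat.{u} R) n).map g.op).app Y =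
      HomologicalComplex.homologyMap (LYmap φ.hom Y) n ≫ (P'.isoExt n Y).inv := by
    let F := ((linearYoneda R (ModuleCat.{u} R)).obj Y).rightOp
    have h2 := ProjectiveResolution.isoLeftDerivedObj_hom_naturality g P' P φ.hom φ.hom_f_zero_comp_π_f_zero F n
    have h3 := HomologicalComplex.homologyOp_hom_naturality (LYmap φ.hom Y) n
    have h3' := congrArg Quiver.Hom.unop h3
    have h2' := congrArg Quiver.Hom.unop h2
    refine (Category.assoc _ _ _).trans ?_
    refine (congrArg (fun t => (HomologicalComplex.homologyUnop ((F.mapHomologicalComplex _).obj P.complex) n).hom ≫ t) h2').trans ?_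
    refine (Category.assoc _ _ _).symm.trans ?_
    refine (congrArg (fun t => t ≫ (P'.isoLeftDerivedObj F n).hom.unop) h3').trans ?_
    exact (Category.assoc _ _ _)
  have h4 : ((LY P Y).homologyπ n ≫ (P.isoExt n Y).inv) ≫ ((Ext R (ModuleCat.{u} R) n).map g.op).app Y =
     HomologicalComplex.cyclesMap (LYmap φ.hom Y) n ≫ ((LY P' Y).homologyπ n ≫ (P'.isoExt n Y).inv) := by
    rw [Category.assoc, h1, ← Category.assoc, ← Category.assoc, HomologicalComplex.homologyπ_naturality]
  exact congrArg (fun f => f.hom z) h4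

theorem theta_nat {X X' : ModuleCat.{u} R} {P : ProjectiveResolution X} {P' : ProjectiveResolution X'} 
    {g : X' ⟶ X} (φ : ProjectiveResolution.Hom P' P g) (Y : ModuleCat.{u} R) (n : ℕ) (z : (LY P Y).cycles n) :
    (Abelian.Ext.mk₀ g).comp (theta P Y n z) (zero_add _) =
      theta P' Y n ((HomologicalComplex.cyclesMap (LYmap φ.hom Y) n).hom z) := by
  rw [theta_apply, theta_apply, ProjectiveResolution.mk₀_comp_extMk _ _ _ _ φ]
  congr 1
  rw [LYmap_iC]

/-- comparison of the two Ext -/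
def extEquiv (X Y : ModuleCat.{u} R) (n : ℕ) : OExt X Y n ≃ₗ[R] Abelian.Ext.{u} X Y n :=
  extEquivAux (projectiveResolution X) Y n

theorem extEquiv_nat {X X' : ModuleCat.{u} R} (g : X' ⟶ X) (Y : ModuleCat.{u} R) (n : ℕ)
    (z : OExt X Y n) : extEquiv X' Y n ((((Ext R (ModuleCat.{u} R) n).map g.op).app Y).hom z) =
      (Abelian.Ext.mk₀ g).comp (extEquiv X Y n z) (zero_add _) := by
  obtain ⟨w, rfl⟩ := rho_surj (projectiveResolution X) Y n z
  let φ : ProjectiveResolution.Hom (projectiveResolution X') (projectiveResolution X) g :=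
    ⟨ProjectiveResolution.lift g _ _, by
      rw [← HomologicalComplex.comp_f, ProjectiveResolution.lift_commutes]; rfl⟩
  rw [rho_nat φ, extEquiv, extEquiv, extEquivAux_rho, extEquivAux_rho, theta_nat φ]

end LCB

end

noncomputable section
open CategoryTheory Limits IsLocalRing
namespace LCB
variable {R : Type u} [CommRing R]

/-- transition maps -/
def qmap (J : Ideal R) {a b : ℕ} (h : a ≤ b) : ModuleCat.of R (R ⧸ J^b) ⟶ ModuleCat.of R (R ⧸ J^a) :=
  ModuleCat.ofHom (Submodule.mapQ _ _ LinearMap.id (Ideal.pow_le_pow_right h))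

theorem qmap_self (J : Ideal R) (a : ℕ) : qmap J (le_refl a) = 𝟙 _ := by
  refine ModuleCat.hom_ext (LinearMap.ext fun x => ?_)
  obtain ⟨x, rfl⟩ := Submodule.Quotient.mk_surjective _ x
  rfl

theorem qmap_comp (J : Ideal R) {a b c : ℕ} (h : a ≤ b) (h' : b ≤ c) :
    qmap J h' ≫ qmap J h = qmap J (h.trans h') := by
  refine ModuleCat.hom_ext (LinearMap.ext fun x => ?_)
  obtain ⟨x, rfl⟩ := Submodule.Quotient.mk_surjective _ x
  rfl

/-- restriction maps on Ext -/
def res (J : Ideal R) (M : ModuleCat.{u} R) (i : ℕ) (a b : ℕ) (h : a ≤ b) :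
    Abelian.Ext.{u} (ModuleCat.of R (R ⧸ J^a)) M i →ₗ[R] Abelian.Ext.{u} (ModuleCat.of R (R ⧸ J^b)) M i :=
  Abelian.Ext.bilinearCompOfLinear R _ _ _ 0 i i (zero_add _) (Abelian.Ext.mk₀ (qmap J h))

theorem res_apply (J : Ideal R) (M : ModuleCat.{u} R) (i : ℕ) (a b : ℕ) (h : a ≤ b) (ξ) :
   res J M i a b h ξ = (Abelian.Ext.mk₀ (qmap J h)).comp ξ (zero_add _) := rfl

instance (J : Ideal R) (M : ModuleCat.{u} R) (i : ℕ) : DirectedSystem 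
   (fun n : ℕ => Abelian.Ext.{u} (ModuleCat.of R (R ⧸ J^n)) M i) (fun a b h => res J M i a b h) where
  map_self a x := by
    rw [res_apply, qmap_self, Abelian.Ext.mk₀_id_comp]
  map_map a b c h h' x := by
    rw [res_apply, res_apply, res_apply, Abelian.Ext.mk₀_comp_mk₀_assoc, qmap_comp]

/-- local cohomology as an explicit direct limit -/
abbrev lc (J : Ideal R) (i : ℕ) (M : ModuleCat.{u} R) : Type u :=
  Module.DirectLimit (fun n : ℕ => Abelian.Ext.{u} (ModuleCat.of R (R ⧸ J^n)) M i) (res J M i)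

abbrev lcof (J : Ideal R) (i : ℕ) (M : ModuleCat.{u} R) (n : ℕ) :
    Abelian.Ext.{u} (ModuleCat.of R (R ⧸ J^n)) M i →ₗ[R] lc J i M :=
  Module.DirectLimit.of R ℕ (fun n : ℕ => Abelian.Ext.{u} (ModuleCat.of R (R ⧸ J^n)) M i) (res J M i) n

/-- the colimit cocone evaluated -/
def lcone (J : Ideal R) (i : ℕ) (M : ModuleCat.{u} R) := (((evaluation _ _).obj M).mapCocone (colimit.cocone (localCohomology.diagram (localCohomology.idealPowersDiagram J) i)))

def lconeIs (J : Ideal R) (i : ℕ) (M : ModuleCat.{u} R) : IsColimit (lcone J i M) :=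
  isColimitOfPreserves _ (colimit.isColimit _)

instance presInst : PreservesFilteredColimitsOfSize.{0, 0} (forget (ModuleCat.{u} R)) :=
  preservesSmallestFilteredColimits_of_preservesFilteredColimits.{u, u} _

def lι (J : Ideal R) (i : ℕ) (M : ModuleCat.{u} R) (n : ℕ) :
   OExt (ModuleCat.of R (R ⧸ J^n)) M i →ₗ[R] (localCohomology J i).obj M :=
  ((lcone J i M).ι.app (.op (.op n))).hom

theorem lι_res (J : Ideal R) (i : ℕ) (M : ModuleCat.{u} R) {a b : ℕ} (h : a ≤ b) (x) :
    lι J i M b ((((Ext R (ModuleCat.{u} R) i).map (qmap J h).op).app M).hom x) = lι J i M a x := by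
  have := (lcone J i M).w (show (Opposite.op (Opposite.op a) : ℕᵒᵖᵒᵖ) ⟶ Opposite.op (Opposite.op b) from (homOfLE h).op.op)
  exact congrArg (fun f => f.hom x) this

theorem lι_exists (J : Ideal R) (i : ℕ) (M : ModuleCat.{u} R) (z : (localCohomology J i).obj M) :
    ∃ n x, lι J i M n x = z := by
  obtain ⟨j, y, h⟩ := Concrete.isColimit_exists_rep _ (lconeIs J i M) z
  exact ⟨j.unop.unop, y, h⟩

theorem colim_zero {J : Type} [SmallCategory J] [IsFiltered J] (F : J ⥤ ModuleCat.{u} R) (D : Cocone F)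
    (hD : IsColimit D) (j : J) (x : F.obj j) (hx : (D.ι.app j).hom x = 0) :
    ∃ (k : J) (f : j ⟶ k), (F.map f).hom x = 0 := by
  obtain ⟨k, f, g, h⟩ := Concrete.isColimit_exists_of_rep_eq F hD x (0 : F.obj j)
    (hx.trans (map_zero (D.ι.app j).hom).symm)
  exact ⟨k, f, h.trans (map_zero (F.map g).hom)⟩

theorem lι_zero (J : Ideal R) (i : ℕ) (M : ModuleCat.{u} R) (a : ℕ) (x) (hx : lι J i M a x = 0) :
    ∃ b, ∃ h : a ≤ b, (((Ext R (ModuleCat.{u} R) i).map (qmap J h).op).app M).hom x = 0 := by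
  obtain ⟨k, f, h⟩ := colim_zero _ (lcone J i M) (lconeIs J i M) (.op (.op a)) x hx
  exact ⟨k.unop.unop, leOfHom f.unop.unop, h⟩

def lcTo (J : Ideal R) (i : ℕ) (M : ModuleCat.{u} R) : lc J i M →ₗ[R] (localCohomology J i).obj M :=
  Module.DirectLimit.lift R ℕ _ _ (fun n => lι J i M n ∘ₗ (extEquiv _ M i).symm.toLinearMap) (by
    intro a b h x
    obtain ⟨y, rfl⟩ := (extEquiv _ M i).surjective x
    simp only [LinearMap.coe_comp, Function.comp_apply, LinearEquiv.coe_coe, LinearEquiv.symm_apply_apply]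
    rw [res_apply, ← extEquiv_nat, LinearEquiv.symm_apply_apply, lι_res])

theorem lcTo_bij (J : Ideal R) (i : ℕ) (M : ModuleCat.{u} R) : Function.Bijective (lcTo J i M) := by
  constructor
  · rw [injective_iff_map_eq_zero]
    intro z hz
    obtain ⟨n, x, rfl⟩ := Module.DirectLimit.exists_of z
    rw [lcTo, Module.DirectLimit.lift_of] at hz
    obtain ⟨b, h, hb⟩ := lι_zero J i M n _ hz
    rw [← Module.DirectLimit.of_f (hij := h)]
    have := extEquiv_nat (qmap J h) M i ((extEquiv _ M i).symm x)
    erw [hb] at this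
    rw [LinearEquiv.apply_symm_apply, map_zero, ← res_apply] at this
    rw [← this, map_zero]
  · intro z
    obtain ⟨n, x, rfl⟩ := lι_exists J i M z
    refine ⟨lcof J i M n (extEquiv _ M i x), ?_⟩
    rw [lcTo, Module.DirectLimit.lift_of]
    simp

def lcEquiv (J : Ideal R) (i : ℕ) (M : ModuleCat.{u} R) : lc J i M ≃ₗ[R] (localCohomology J i).obj M :=
  LinearEquiv.ofBijective _ (lcTo_bij J i M)

end LCB

end

noncomputable section
open CategoryTheory Limits IsLocalRing
namespace LCB
variable {R : Type u} [CommRing R]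

/-- short complex of a linear map with surjective `p` -/
def kses {F K : Type u} [AddCommGroup F] [Module R F] [AddCommGroup K] [Module R K] (p : F →ₗ[R] K) :
    ShortComplex (ModuleCat.{u} R) :=
  ShortComplex.mk (ModuleCat.ofHom (LinearMap.ker p).subtype) (ModuleCat.ofHom p) (by
    refine ModuleCat.hom_ext (LinearMap.ext fun x => ?_)
    exact x.2)

theorem kses_exact {F K : Type u} [AddCommGroup F] [Module R F] [AddCommGroup K] [Module R K] (p : F →ₗ[R] K)
    (hp : Function.Surjective p) : (kses p).ShortExact where
  exact := by
    rw [ShortComplex.moduleCat_exact_iff]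
    intro x hx
    exact ⟨⟨x, hx⟩, rfl⟩
  mono_f := (ModuleCat.mono_iff_injective _).2 Subtype.val_injective
  epi_g := (ModuleCat.epi_iff_surjective _).2 hp

theorem kaux {F K F' K' : Type u} [AddCommGroup F] [Module R F] [AddCommGroup K] [Module R K]
    [AddCommGroup F'] [Module R F'] [AddCommGroup K'] [Module R K'] (p : F →ₗ[R] K) (p' : F' →ₗ[R] K')
    (a : F' →ₗ[R] F) (b : K' →ₗ[R] K) (h : p ∘ₗ a = b ∘ₗ p') :
    ∀ x ∈ LinearMap.ker p', a x ∈ LinearMap.ker p := by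
  intro x hx
  have := LinearMap.congr_fun h x
  simp only [LinearMap.comp_apply] at this
  rw [LinearMap.mem_ker] at hx ⊢
  rw [this, hx, map_zero]

theorem kill_abs {S' S : ShortComplex (ModuleCat.{u} R)} (hS' : S'.ShortExact) (hS : S.ShortExact) (φ : S' ⟶ S)
    {Z T : ModuleCat.{u} R} (w : S'.X₁ ⟶ Z) (ι : Z ⟶ S.X₁) (hw : φ.τ₁ = w ≫ ι) {i : ℕ}
    (η : Abelian.Ext.{u} S.X₁ T i) (hN : (Abelian.Ext.mk₀ ι).comp η (zero_add _) = 0) (j : ℕ) (hj : 1 + i = j) :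
    (Abelian.Ext.mk₀ φ.τ₃).comp (hS.extClass.comp η hj) (zero_add _) = 0 := by
  have hnat := ShortComplex.ShortExact.extClass_naturality hS' hS φ
  have h0 : (Abelian.Ext.mk₀ φ.τ₁).comp η (zero_add i) = 0 := by
    rw [hw, ← Abelian.Ext.mk₀_comp_mk₀_assoc, hN, Abelian.Ext.comp_zero]
  rw [← Abelian.Ext.comp_assoc (Abelian.Ext.mk₀ φ.τ₃) hS.extClass η (zero_add 1) (by omega) (by omega)]
  rw [← hnat, Abelian.Ext.comp_assoc (a₂₃ := i) _ _ _ (add_zero 1) (zero_add i) (by omega), h0, Abelian.Ext.comp_zero]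

def ksesMap {F K F' K' : Type u} [AddCommGroup F] [Module R F] [AddCommGroup K] [Module R K]
    [AddCommGroup F'] [Module R F'] [AddCommGroup K'] [Module R K'] (p : F →ₗ[R] K) (p' : F' →ₗ[R] K')
    (a : F' →ₗ[R] F) (b : K' →ₗ[R] K) (h : p ∘ₗ a = b ∘ₗ p') : kses p' ⟶ kses p where
  τ₁ := ModuleCat.ofHom (a.restrict (p := LinearMap.ker p') (q := LinearMap.ker p) (kaux p p' a b h))
  τ₂ := ModuleCat.ofHom a
  τ₃ := ModuleCat.ofHom b
  comm₁₂ := by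
    refine ModuleCat.hom_ext (LinearMap.ext fun x => ?_)
    rfl
  comm₂₃ := by
    refine ModuleCat.hom_ext (LinearMap.ext fun x => ?_)
    exact LinearMap.congr_fun h x

/-- some power-restriction kills -/
def KillsAt (J : Ideal R) (K T : Type u) [AddCommGroup K] [Module R K] [AddCommGroup T] [Module R T] (i : ℕ)
   : Prop := ∀ ξ : Abelian.Ext.{u} (ModuleCat.of R K) (ModuleCat.of R T) i, ∃ N : ℕ,
     (Abelian.Ext.mk₀ (ModuleCat.ofHom (J^N • (⊤ : Submodule R K)).subtype)).comp ξ (zero_add _) = 0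

theorem kill_step (J : Ideal R) {F K T : Type u} [AddCommGroup F] [Module R F] [AddCommGroup K] [Module R K]
    [AddCommGroup T] [Module R T] [Module.Free R F] (p : F →ₗ[R] K) (hp : Function.Surjective p) (i : ℕ)
    (ih : KillsAt J (LinearMap.ker p) T i)
    (ξ : Abelian.Ext.{u} (ModuleCat.of R K) (ModuleCat.of R T) (i+1)) :
    ∃ N : ℕ, ∀ (F' K' : Type u) [AddCommGroup F'] [Module R F'] [AddCommGroup K'] [Module R K']
      (p' : F' →ₗ[R] K') (a : F' →ₗ[R] F) (b : K' →ₗ[R] K), Function.Surjective p' → p ∘ₗ a = b ∘ₗ p' →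
      (∀ z ∈ LinearMap.ker p', a z ∈ J^N • LinearMap.ker p) →
      (Abelian.Ext.mk₀ (ModuleCat.ofHom b)).comp ξ (zero_add _) = 0 := by
  have hS := kses_exact p hp
  have : Projective (ModuleCat.of R F) := ModuleCat.projective_of_free (Module.Free.chooseBasis R F)
  obtain ⟨η, hη⟩ := Abelian.Ext.contravariant_sequence_exact₃ hS (ModuleCat.of R T) (n₁ := i + 1) ξ
    (Abelian.Ext.eq_zero_of_projective (P := ModuleCat.of R F) _) (n₀ := i) (by omega)
  obtain ⟨N, hN⟩ := ih η
  refine ⟨N, ?_⟩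
  intro F' K' _ _ _ _ p' a b hp' hsq hz
  have hS' := kses_exact p' hp'
  have hmem : ∀ z : LinearMap.ker p', (a.restrict (p := LinearMap.ker p') (q := LinearMap.ker p) (kaux p p' a b hsq)) z ∈
      (J^N • (⊤ : Submodule R (LinearMap.ker p)) : Submodule R (LinearMap.ker p)) := by
    intro z
    have h1 := hz z.1 z.2
    have h2 : J^N • LinearMap.ker p = Submodule.map (LinearMap.ker p).subtype (J^N • ⊤) := by
      rw [Submodule.map_smul'', Submodule.map_top, Submodule.range_subtype]
    rw [h2] at h1
    obtain ⟨y, hy, hyz⟩ := h1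
    have : (a.restrict (p := LinearMap.ker p') (q := LinearMap.ker p) (kaux p p' a b hsq)) z = y := Subtype.ext hyz.symm
    rw [this]; exact hy
  have := kill_abs hS' hS (ksesMap p p' a b hsq) (ModuleCat.ofHom (LinearMap.codRestrict _ _ hmem))
    (ModuleCat.ofHom (J^N • (⊤ : Submodule R (LinearMap.ker p))).subtype) rfl η hN (i+1) (by omega)
  rw [← hη]
  exact this

theorem killsAt [IsNoetherianRing R] (J : Ideal R) (T : Type u) [AddCommGroup T] [Module R T] (c : ℕ)
    (hT : J^c • (⊤ : Submodule R T) = ⊥) (i : ℕ) : ∀ (K : Type u) [AddCommGroup K] [Module R K] [Module.Finite R K],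
    KillsAt J K T i := by
  induction i with
  | zero =>
    intro K _ _ _ ξ
    refine ⟨c, ?_⟩
    rw [← Abelian.Ext.mk₀_homEquiv₀_apply ξ, Abelian.Ext.mk₀_comp_mk₀, Abelian.Ext.mk₀_eq_zero_iff]
    set f := Abelian.Ext.homEquiv₀ ξ
    refine ModuleCat.hom_ext (LinearMap.ext fun x => ?_)
    change f.hom x.1 = 0
    have : f.hom x.1 ∈ Submodule.map f.hom (J^c • ⊤) := Submodule.mem_map_of_mem x.2
    rw [Submodule.map_smul''] at this
    have h2 := (Submodule.smul_mono (le_refl (J^c)) (le_top : Submodule.map f.hom ⊤ ≤ ⊤)) this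
    rw [hT] at h2
    exact h2
  | succ i ih =>
    intro K _ _ _ ξ
    obtain ⟨n, p, hp⟩ := Module.Finite.exists_fin' R K
    obtain ⟨N, hN⟩ := kill_step J p hp i (ih _) ξ
    obtain ⟨k, hk⟩ := Ideal.exists_pow_inf_eq_pow_smul J (LinearMap.ker p)
    refine ⟨N + k, ?_⟩
    let p' : (J^(N+k) • (⊤ : Submodule R (Fin n → R)) : Submodule R (Fin n → R)) →ₗ[R] (J^(N+k) • (⊤ : Submodule R K) : Submodule R K) :=
      p.restrict (by
        intro x hx
        have : p x ∈ Submodule.map p (J^(N+k) • ⊤) := Submodule.mem_map_of_mem hx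
        rw [Submodule.map_smul''] at this
        exact (Submodule.smul_mono le_rfl le_top) this)
    refine hN _ _ p' (Submodule.subtype _) (Submodule.subtype _) ?_ ?_ ?_
    · rintro ⟨y, hy⟩
      have : J^(N+k) • (⊤ : Submodule R K) = Submodule.map p (J^(N+k) • ⊤) := by
        rw [Submodule.map_smul'', Submodule.map_top, LinearMap.range_eq_top.2 hp]
      rw [this] at hy
      obtain ⟨x, hx, rfl⟩ := hy
      exact ⟨⟨x, hx⟩, rfl⟩
    · rfl
    · intro z hz
      have h1 : z.1 ∈ J^(N+k) • ⊤ ⊓ LinearMap.ker p := ⟨z.2, by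
        have := congrArg Subtype.val (LinearMap.mem_ker.1 hz)
        exact this⟩
      rw [hk _ (by omega)] at h1
      rw [show N + k - k = N by omega] at h1
      exact (Submodule.smul_mono le_rfl inf_le_right) h1

theorem lc_torsion [IsNoetherianRing R] (J : Ideal R) (T : Type u) [AddCommGroup T] [Module R T] (c : ℕ)
    (hT : J^c • (⊤ : Submodule R T) = ⊥) (i : ℕ) : Subsingleton (lc J (i+1) (ModuleCat.of R T)) := by
  refine subsingleton_of_forall_eq 0 fun z => ?_
  obtain ⟨n, ξ, rfl⟩ := Module.DirectLimit.exists_of z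
  obtain ⟨N, hN⟩ := kill_step J (J^n).mkQ (Submodule.mkQ_surjective _) i (killsAt J T c hT i _) ξ
  rw [← Module.DirectLimit.of_f (hij := Nat.le_add_left n N), res_apply]
  rw [qmap, hN R _ (J^(N+n)).mkQ LinearMap.id _ (Submodule.mkQ_surjective _) rfl, map_zero]
  intro z hz
  rw [Submodule.ker_mkQ] at hz ⊢
  rw [pow_add] at hz
  exact hz

/-- length of local cohomology -/
def Hl (J : Ideal R) (i : ℕ) (M : Type u) [AddCommGroup M] [Module R M] : ℕ∞ :=
  Module.length R (lc J i (ModuleCat.of R M))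

theorem Hl_torsion [IsNoetherianRing R] (J : Ideal R) (T : Type u) [AddCommGroup T] [Module R T] (c : ℕ)
    (hT : J^c • (⊤ : Submodule R T) = ⊥) (i : ℕ) : Hl J (i+1) T = 0 :=
  Module.length_eq_zero_iff.2 (lc_torsion J T c hT i)

theorem mlen_lcoh [IsLocalRing R] (i : ℕ) (M : Type u) [AddCommGroup M] [Module R M] :
   mlen R (lcoh R i M) = (Hl (maximalIdeal R) i M : WithBot ℕ∞) := by
  rw [mlen, ← Module.coe_length, Hl, (lcEquiv _ i _).length_eq]
  rfl

section ses
variable {A B C : Type u} [AddCommGroup A] [Module R A] [AddCommGroup B] [Module R B] [AddCommGroup C] [Module R C]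

def lcPost (J : Ideal R) (i : ℕ) (X Y : ModuleCat.{u} R) (k : ℕ) (κ : Abelian.Ext.{u} X Y k) (j : ℕ) (h : i + k = j) :
    lc J i X →ₗ[R] lc J j Y :=
  Module.DirectLimit.map (fun n => (Abelian.Ext.bilinearCompOfLinear R (ModuleCat.of R (R ⧸ J^n)) X Y i k j h).flip κ) (by
    intro a b hab
    ext ξ
    change ((Abelian.Ext.mk₀ (qmap J hab)).comp ξ (zero_add i)).comp κ h = (Abelian.Ext.mk₀ (qmap J hab)).comp (ξ.comp κ h) (zero_add j)
    rw [Abelian.Ext.comp_assoc _ _ _ (zero_add i) h (by omega)])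

theorem lcPost_of (J : Ideal R) (i : ℕ) (X Y : ModuleCat.{u} R) (k : ℕ) (κ : Abelian.Ext.{u} X Y k) (j : ℕ) (h : i + k = j)
   (n : ℕ) (ξ) : lcPost J i X Y k κ j h (lcof J i X n ξ) = lcof J j Y n (ξ.comp κ h) := by
  rw [lcPost, lcof, Module.DirectLimit.map_apply_of]
  rfl

theorem Hl_ses (J : Ideal R) (S : ShortComplex (ModuleCat.{u} R)) (hS : S.ShortExact) (i : ℕ) :
    Module.length R (lc J i S.X₃) ≤ Module.length R (lc J i S.X₂) + Module.length R (lc J (i+1) S.X₁) := by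
  let g := lcPost J i S.X₂ S.X₃ 0 (Abelian.Ext.mk₀ S.g) i (add_zero i)
  let δ := lcPost J i S.X₃ S.X₁ 1 hS.extClass (i+1) rfl
  have hk : LinearMap.ker δ ≤ LinearMap.range g := by
    intro z hz
    obtain ⟨n, ξ, rfl⟩ := Module.DirectLimit.exists_of z
    rw [LinearMap.mem_ker] at hz
    erw [lcPost_of] at hz
    obtain ⟨b, hb, h0⟩ := Module.DirectLimit.of.zero_exact hz
    rw [res_apply, ← Abelian.Ext.comp_assoc _ _ _ (zero_add i) rfl (by omega)] at h0
    obtain ⟨η, hη⟩ := Abelian.Ext.covariant_sequence_exact₃ _ hS _ rfl h0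
    refine ⟨lcof J i _ b η, ?_⟩
    erw [lcPost_of]
    rw [hη, ← res_apply, lcof, Module.DirectLimit.of_f]
  rw [Module.length_eq_add_of_exact (LinearMap.ker δ).subtype δ.rangeRestrict Subtype.val_injective
    (LinearMap.surjective_rangeRestrict _) (by
      intro x
      constructor
      · intro h; exact ⟨⟨x, congrArg Subtype.val h⟩, rfl⟩
      · rintro ⟨y, rfl⟩; exact Subtype.ext y.2)]
  refine add_le_add ?_ ?_
  · calc _ ≤ Module.length R (LinearMap.range g) := Module.length_le_of_injective (Submodule.inclusion hk) (Submodule.inclusion_injective hk)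
      _ ≤ _ := Module.length_le_of_surjective g.rangeRestrict (LinearMap.surjective_rangeRestrict _)
  · exact Module.length_le_of_injective (LinearMap.range δ).subtype Subtype.val_injective

theorem Hl_le_of_exact (J : Ideal R) (f : A →ₗ[R] B) (g : B →ₗ[R] C) (hf : Function.Injective f)
    (hfg : Function.Exact f g) (hg : Function.Surjective g) (i : ℕ) : Hl J i C ≤ Hl J i B + Hl J (i+1) A := by
  let S : ShortComplex (ModuleCat.{u} R) := ShortComplex.mk (ModuleCat.ofHom f) (ModuleCat.ofHom g) (by
    refine ModuleCat.hom_ext (LinearMap.ext fun x => ?_)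
    exact (hfg _).2 ⟨x, rfl⟩)
  have hS : S.ShortExact := {
    exact := by
      rw [ShortComplex.moduleCat_exact_iff]
      intro x hx
      exact (hfg x).1 hx
    mono_f := (ModuleCat.mono_iff_injective _).2 hf
    epi_g := (ModuleCat.epi_iff_surjective _).2 hg }
  exact Hl_ses J S hS i
end ses

end LCB

end

noncomputable section
open CategoryTheory Limits IsLocalRing
namespace LCB
variable {R : Type u} [CommRing R]

def ev1 (J : Ideal R) (M : Type u) [AddCommGroup M] [Module R M] (n : ℕ) :
    Abelian.Ext.{u} (ModuleCat.of R (R ⧸ J^n)) (ModuleCat.of R M) 0 →ₗ[R] M :=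
  (LinearMap.applyₗ (Submodule.Quotient.mk (p := J^n) (1 : R)) : (((R ⧸ J^n) →ₗ[R] M) →ₗ[R] M)) ∘ₗ
   ((Abelian.Ext.linearEquiv₀ (R := R) (X := ModuleCat.of R (R ⧸ J^n)) (Y := ModuleCat.of R M)).trans 
     (ModuleCat.homLinearEquiv (S := R))).toLinearMap

theorem ev1_mk₀ (J : Ideal R) (M : Type u) [AddCommGroup M] [Module R M] (n : ℕ) 
  (f : ModuleCat.of R (R ⧸ J^n) ⟶ ModuleCat.of R M) : ev1 J M n (Abelian.Ext.mk₀ f) = f.hom (Submodule.Quotient.mk (p := J^n) (1 : R)) := by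
  have : (Abelian.Ext.linearEquiv₀ (R := R) (X := ModuleCat.of R (R ⧸ J^n)) (Y := ModuleCat.of R M)) (Abelian.Ext.mk₀ f) = f :=
    (Abelian.Ext.linearEquiv₀ (R := R)).symm.injective (by rw [LinearEquiv.symm_apply_apply]; rfl)
  change (Abelian.Ext.linearEquiv₀ (R := R) (X := ModuleCat.of R (R ⧸ J^n)) (Y := ModuleCat.of R M) (Abelian.Ext.mk₀ f)).hom _ = _
  rw [this]

def lcEv (J : Ideal R) (M : Type u) [AddCommGroup M] [Module R M] : lc J 0 (ModuleCat.of R M) →ₗ[R] M :=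
  Module.DirectLimit.lift _ _ _ _ (fun n => ev1 J M n) (by
    intro a b h ξ
    rw [res_apply, ← Abelian.Ext.mk₀_homEquiv₀_apply ξ, Abelian.Ext.mk₀_comp_mk₀, ev1_mk₀, ev1_mk₀]
    rfl)

theorem length_tors_le (J : Ideal R) (M : Type u) [AddCommGroup M] [Module R M] :
    Module.length R ((⨆ n : ℕ, Submodule.torsionBySet R M ((J ^ n : Ideal R) : Set R) : Submodule R M)) ≤ Hl J 0 M := by
  have : (⨆ n : ℕ, Submodule.torsionBySet R M ((J ^ n : Ideal R) : Set R) : Submodule R M) ≤ LinearMap.range (lcEv J M) := by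
    refine iSup_le fun n x hx => ?_
    let f : (R ⧸ J^n) →ₗ[R] M := (J^n).liftQ (LinearMap.toSpanSingleton R M x) (by
      intro r hr
      rw [LinearMap.mem_ker, LinearMap.toSpanSingleton_apply]
      rw [Submodule.mem_torsionBySet_iff] at hx
      exact hx ⟨r, hr⟩)
    refine ⟨lcof J 0 _ n (Abelian.Ext.mk₀ (ModuleCat.ofHom f)), ?_⟩
    rw [lcEv, lcof, Module.DirectLimit.lift_of, ev1_mk₀]
    change f _ = x
    rw [Submodule.liftQ_apply, LinearMap.toSpanSingleton_apply, one_smul]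
  calc _ ≤ Module.length R (LinearMap.range (lcEv J M)) := Module.length_le_of_injective (Submodule.inclusion this) (Submodule.inclusion_injective this)
    _ ≤ _ := Module.length_le_of_surjective (lcEv J M).rangeRestrict (LinearMap.surjective_rangeRestrict _)

section loc
variable [IsLocalRing R]

theorem length_H0_le (M : Type u) [AddCommGroup M] [Module R M] :
    Module.length R (H0 R M) ≤ Hl (maximalIdeal R) 0 M := length_tors_le _ _

theorem mem_H0 {M : Type u} [AddCommGroup M] [Module R M] {x : M} :
    x ∈ H0 R M ↔ ∃ n : ℕ, ∀ r ∈ maximalIdeal R ^ n, r • x = 0 := by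
  rw [H0, Submodule.mem_iSup_of_directed]
  · refine exists_congr fun n => ?_
    rw [Submodule.mem_torsionBySet_iff]
    exact ⟨fun h r hr => h ⟨r, hr⟩, fun h r => h r.1 r.2⟩
  · refine directed_of_isDirected_le ?_
    intro a b hab
    exact Submodule.torsionBySet_le_torsionBySet_of_subset (Ideal.pow_le_pow_right hab)

variable [IsNoetherianRing R]

theorem H0_killed (M : Type u) [AddCommGroup M] [Module R M] [Module.Finite R M] :
    ∃ c, ∀ r ∈ maximalIdeal R ^ c, ∀ x ∈ H0 R M, r • x = 0 := by
  obtain ⟨s, hs⟩ := (inferInstance : IsNoetherian R M).noetherian (H0 R M)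
  have h1 : ∀ x ∈ s, ∃ n : ℕ, ∀ r ∈ maximalIdeal R ^ n, r • x = 0 := fun x hx =>
    mem_H0.1 (hs ▸ Submodule.subset_span hx)
  choose! N hN using h1
  refine ⟨s.sup N, fun r hr x hx => ?_⟩
  have : H0 R M ≤ LinearMap.ker (LinearMap.lsmul R M r) := by
    rw [← hs, Submodule.span_le]
    intro y hy
    exact hN y hy r (Ideal.pow_le_pow_right (Finset.le_sup hy) hr)
  exact this hx

theorem H0_quot (M : Type u) [AddCommGroup M] [Module R M] [Module.Finite R M] (z : M ⧸ H0 R M)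
    (hz : ∀ r ∈ maximalIdeal R, r • z = 0) : z = 0 := by
  obtain ⟨c, hc⟩ := H0_killed (R := R) M
  obtain ⟨x, rfl⟩ := Submodule.Quotient.mk_surjective _ z
  rw [Submodule.Quotient.mk_eq_zero, mem_H0]
  refine ⟨c + 1, fun r hr => ?_⟩
  rw [pow_succ] at hr
  induction hr using Submodule.mul_induction_on' with
  | mem_mul_mem a ha b hb =>
    rw [mul_smul]
    refine hc a ha _ ?_
    have := hz b hb
    rwa [← Submodule.Quotient.mk_smul, Submodule.Quotient.mk_eq_zero] at this
  | add a _ b _ h1 h2 => rw [add_smul, h1, h2, add_zero]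

theorem Hl_quot_H0 (M : Type u) [AddCommGroup M] [Module R M] [Module.Finite R M] (i : ℕ) :
    Hl (maximalIdeal R) i (M ⧸ H0 R M) ≤ Hl (maximalIdeal R) i M := by
  obtain ⟨c, hc⟩ := H0_killed (R := R) M
  have h0 := Hl_torsion (maximalIdeal R) (H0 R M) c (by
    rw [eq_bot_iff, Submodule.smul_le]
    intro r hr x _
    exact Subtype.ext (hc r hr x.1 x.2)) i
  have := Hl_le_of_exact (maximalIdeal R) (H0 R M).subtype (H0 R M).mkQ Subtype.val_injective
    (LinearMap.exact_subtype_mkQ _) (Submodule.mkQ_surjective _) i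
  rwa [h0, add_zero] at this

end loc

theorem Hl_quot_reg (J : Ideal R) (M : Type u) [AddCommGroup M] [Module R M] (x : R) (hx : IsSMulRegular M x) (i : ℕ) :
    Hl J i (QuotSMulTop x M) ≤ Hl J i M + Hl J (i+1) M := 
  Hl_le_of_exact J (LinearMap.lsmul R M x) (Submodule.mkQ _) hx (by
    rw [LinearMap.exact_iff, Submodule.ker_mkQ]
    ext z
    rw [Submodule.mem_smul_pointwise_iff_exists]
    simp) (Submodule.mkQ_surjective _) i

theorem Hl_equiv (J : Ideal R) {M N : Type u} [AddCommGroup M] [Module R M] [AddCommGroup N] [Module R N] (e : M ≃ₗ[R] N)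
    (i : ℕ) [IsNoetherianRing R] : Hl J i N ≤ Hl J i M := by
  have := Hl_le_of_exact J (A := PUnit.{u+1}) (0 : _ →ₗ[R] M) e.toLinearMap (fun _ _ _ => Subsingleton.elim _ _) (by
    rw [LinearMap.exact_iff]; simp) e.surjective i
  rwa [Hl_torsion J PUnit.{u+1} 0 (Subsingleton.elim _ _), add_zero] at this

section loc
variable [IsLocalRing R] [IsNoetherianRing R]

/-- regular sequences kill local cohomology -/
theorem Hl_of_reg (M : Type u) [AddCommGroup M] [Module R M] [Module.Finite R M] [Nontrivial M] (rs : List R)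
    (mem : ∀ r ∈ rs, r ∈ maximalIdeal R) (reg : RingTheory.Sequence.IsRegular M rs) (i : ℕ) (hi : i < rs.length) :
    Hl (maximalIdeal R) i M = 0 := by
  refine Module.length_eq_zero_iff.2 (subsingleton_of_forall_eq 0 fun z => ?_)
  obtain ⟨n, ξ, rfl⟩ := Module.DirectLimit.exists_of z
  have hlt : maximalIdeal R • (⊤ : Submodule R M) < ⊤ := by
    rw [lt_top_iff_ne_top]
    intro h
    have := Submodule.eq_bot_of_le_smul_of_le_jacobson_bot (maximalIdeal R) (⊤ : Submodule R M) Module.Finite.fg_top h.ge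
      (IsLocalRing.maximalIdeal_le_jacobson _)
    exact absurd this (by simp)
  have : Subsingleton (Abelian.Ext.{u} (ModuleCat.of R (R ⧸ maximalIdeal R ^ n)) (ModuleCat.of R M) i) := by
    refine ModuleCat.subsingleton_ext_of_exists_isRegular (maximalIdeal R) (ModuleCat.of R (R ⧸ maximalIdeal R ^ n)) ?_ 
      (ModuleCat.of R M) hlt rs mem reg i hi
    rw [Module.support_eq_zeroLocus]
    change PrimeSpectrum.zeroLocus (Module.annihilator R (R ⧸ maximalIdeal R ^ n) : Set R) ⊆ _
    rw [Ideal.annihilator_quotient]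
    intro p hp
    exact p.2.le_of_pow_le hp
  rw [Subsingleton.elim ξ 0, map_zero]

theorem ass_not_max {M : Type u} [AddCommGroup M] [Module R M]
    (hM : ∀ z : M, (∀ r ∈ maximalIdeal R, r • z = 0) → z = 0) (p : Ideal R) (hp : p ∈ associatedPrimes R M)
    (h : maximalIdeal R ≤ p) : False := by
  obtain ⟨hpp, z, hz⟩ := isAssociatedPrime_iff.1 hp
  have h0 : z = 0 := hM z fun r hr => by
    have := h hr
    rw [hz, Submodule.mem_colon_singleton] at this
    exact this
  refine hpp.ne_top ?_
  rw [hz, Ideal.eq_top_iff_one, Submodule.mem_colon_singleton, h0, smul_zero]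
  exact Submodule.zero_mem _

theorem exists_reg_elt (M : Type u) [AddCommGroup M] [Module R M] [Module.Finite R M] 
    (hM : ∀ z : M, (∀ r ∈ maximalIdeal R, r • z = 0) → z = 0) : ∃ y ∈ maximalIdeal R, IsSMulRegular M y := by
  by_contra! hcon
  have h1 : ((maximalIdeal R : Ideal R) : Set R) ⊆ ⋃ p ∈ associatedPrimes R M, p := by
    rw [biUnion_associatedPrimes_eq_compl_regular]
    intro y hy
    exact hcon y hy
  obtain ⟨p, hp, h2⟩ := (Ideal.subset_union_prime_finite (associatedPrimes.finite R M) (f := id) 0 0 (fun p hp _ _ => hp.isPrime)).1 h1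
  exact ass_not_max hM p hp h2

theorem reg_of_Hl (k : ℕ) : ∀ (M : Type u) [AddCommGroup M] [Module R M] [Module.Finite R M] [Nontrivial M],
    (∀ i < k, Hl (maximalIdeal R) i M = 0) →
    ∃ rs : List R, rs.length = k ∧ (∀ r ∈ rs, r ∈ maximalIdeal R) ∧ RingTheory.Sequence.IsRegular M rs := by
  induction k with
  | zero =>
    intro M _ _ _ _ _
    exact ⟨[], rfl, by simp, RingTheory.Sequence.IsRegular.nil R M⟩
  | succ k ih =>
    intro M _ _ _ _ h
    have h0 : Module.length R (H0 R M) = 0 := le_antisymm ((length_H0_le M).trans (h 0 (by omega)).le) bot_le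
    have h0' := Module.length_eq_zero_iff.1 h0
    obtain ⟨y, hy, hreg⟩ := exists_reg_elt M (fun z hz => by
      have : z ∈ H0 R M := mem_H0.2 ⟨1, by rw [pow_one]; exact hz⟩
      exact congrArg Subtype.val (Subsingleton.elim (⟨z, this⟩ : H0 R M) 0))
    have : Nontrivial (QuotSMulTop y M) := by
      refine Submodule.Quotient.nontrivial_iff.2 ?_
      intro h
      have := Submodule.eq_bot_of_le_smul_of_le_jacobson_bot (maximalIdeal R) (⊤ : Submodule R M) Module.Finite.fg_top (by
        refine h.ge.trans ?_
        intro z hz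
        obtain ⟨w, _, rfl⟩ := (Submodule.mem_smul_pointwise_iff_exists _ _ _).1 hz
        exact Submodule.smul_mem_smul hy trivial)
        (IsLocalRing.maximalIdeal_le_jacobson _)
      exact absurd this (by simp)
    obtain ⟨rs, h1, h2, h3⟩ := ih (QuotSMulTop y M) (fun i hi => by
      have := Hl_quot_reg (maximalIdeal R) M y hreg i
      rw [h i (by omega), h (i+1) (by omega), add_zero] at this
      exact le_antisymm this bot_le)
    refine ⟨y :: rs, by simp [h1], ?_, RingTheory.Sequence.IsRegular.cons hreg h3⟩
    simpa using ⟨hy, h2⟩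

theorem le_mdepth_iff (k : ℕ) : (k : ℕ∞) ≤ mdepth R R ↔ ∀ i < k, Hl (maximalIdeal R) i R = 0 := by
  constructor
  · intro h i hi
    have : (i : ℕ∞) < mdepth R R := lt_of_lt_of_le (by exact_mod_cast hi) h
    obtain ⟨n, ⟨rs, rfl, h2, h3⟩, h4⟩ := lt_sSup_iff.1 this
    exact Hl_of_reg R rs h2 h3 i (by exact_mod_cast h4)
  · intro h
    obtain ⟨rs, h1, h2, h3⟩ := reg_of_Hl k R h
    exact le_sSup ⟨rs, by rw [h1], h2, h3⟩

end loc
end LCB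

end

noncomputable section
namespace LCB
open Finset

theorem mc_sum (d n : ℕ) : ∑ k ∈ range (n+1), Nat.multichoose d k = Nat.multichoose (d+1) n := by
  induction n with
  | zero => simp
  | succ n ih => rw [sum_range_succ, ih, Nat.multichoose_succ_succ]; ring

theorem mc_pos (d n : ℕ) : 1 ≤ Nat.multichoose (d+1) n := by
  rw [Nat.multichoose_eq]
  exact Nat.choose_pos (by omega)

/-- growth bound -/
def GE (d : ℕ) (L : ℕ → ℕ) (c : ℤ) : Prop :=
  ∃ K : ℕ, ∀ n, c * (Nat.multichoose (d+1) n : ℤ) ≤ L n + K * (Nat.multichoose d n : ℤ)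

theorem GE_mono {d : ℕ} {L : ℕ → ℕ} {c c' : ℤ} (h : c ≤ c') (H : GE d L c') : GE d L c := by
  obtain ⟨K, hK⟩ := H
  refine ⟨K, fun n => le_trans ?_ (hK n)⟩
  exact mul_le_mul_of_nonneg_right h (by positivity)

theorem GE_mono_left {d : ℕ} {L L' : ℕ → ℕ} {c : ℤ} (h : ∀ n, L n ≤ L' n) (H : GE d L c) : GE d L' c := by
  obtain ⟨K, hK⟩ := H
  refine ⟨K, fun n => (hK n).trans ?_⟩
  have := h n
  gcongr

/-- previous value -/
def prev (L : ℕ → ℕ) (n : ℕ) : ℕ := if n = 0 then 0 else L (n-1)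

theorem tele (L L' ε : ℕ → ℕ) (h : ∀ n, L n + ε n = L' n + prev L n) (n : ℕ) :
    L n + ∑ k ∈ range (n+1), ε k = ∑ k ∈ range (n+1), L' k := by
  induction n with
  | zero => simpa [prev] using h 0
  | succ n ih =>
    rw [sum_range_succ, sum_range_succ (fun k => L' k), ← ih]
    have := h (n+1)
    simp only [prev, Nat.add_eq_zero_iff, one_ne_zero, and_false, if_false, Nat.add_sub_cancel] at this
    omega

theorem GE_step (d : ℕ) (L L' ε : ℕ → ℕ) (h : ∀ n, L n + ε n = L' n + prev L n) (C c0 : ℕ)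
    (h1 : ∀ n, n < c0 → ε n ≤ C) (h2 : ∀ n, c0 ≤ n → ε n ≤ C * Nat.multichoose d (n - c0)) (c : ℤ)
    (H : GE d L' c) : GE (d+1) L c := by
  obtain ⟨K, hK⟩ := H
  have hε : ∀ n, ∑ k ∈ range (n+1), ε k ≤ c0 * C + C * Nat.multichoose (d+1) n := by
    intro n
    have : ∀ N, ∑ k ∈ range N, ε k ≤ min N c0 * C + C * ∑ j ∈ range (N - c0), Nat.multichoose d j := by
      intro N
      induction N with
      | zero => simp
      | succ N ih =>
        rw [sum_range_succ]
        by_cases hN : N < c0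
        · have := h1 N hN
          have e1 : min (N+1) c0 = min N c0 + 1 := by omega
          have e2 : N + 1 - c0 = N - c0 := by omega
          rw [e1, e2, add_mul]
          omega
        · have := h2 N (by omega)
          have e1 : min (N+1) c0 = min N c0 := by omega
          have e2 : N + 1 - c0 = N - c0 + 1 := by omega
          rw [e1, e2, sum_range_succ, mul_add]
          omega
    refine (this _).trans ?_
    rw [← mc_sum]
    refine add_le_add (Nat.mul_le_mul_right _ (min_le_right _ _)) (Nat.mul_le_mul_left _ ?_)
    exact sum_le_sum_of_subset (range_subset_range.2 (by omega))
  refine ⟨K + (c0 * C + C), fun n => ?_⟩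
  have ht : (L n : ℤ) + ∑ k ∈ range (n+1), (ε k : ℤ) = ∑ k ∈ range (n+1), (L' k : ℤ) := by
    exact_mod_cast tele L L' ε h n
  have he : ∑ k ∈ range (n+1), (ε k : ℤ) ≤ c0 * C + C * Nat.multichoose (d+1) n := by exact_mod_cast hε n
  have hs : ∑ k ∈ range (n+1), (c * (Nat.multichoose (d+1) k : ℤ)) ≤ ∑ k ∈ range (n+1), ((L' k : ℤ) + K * (Nat.multichoose d k : ℤ)) :=
    sum_le_sum fun k _ => hK k
  rw [sum_add_distrib, ← mul_sum, ← mul_sum] at hs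
  have m1 : ∑ k ∈ range (n+1), (Nat.multichoose (d+1) k : ℤ) = Nat.multichoose (d+1+1) n := by exact_mod_cast mc_sum (d+1) n
  have m2 : ∑ k ∈ range (n+1), (Nat.multichoose d k : ℤ) = Nat.multichoose (d+1) n := by exact_mod_cast mc_sum d n
  rw [m1, m2] at hs
  have hp : (1:ℤ) ≤ Nat.multichoose (d+1) n := by exact_mod_cast mc_pos d n
  have : (c0 * C : ℤ) ≤ (c0 * C) * Nat.multichoose (d+1) n := le_mul_of_one_le_right (by positivity) hp
  push_cast
  linarith [this]

/-- shifted cohomology bound -/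
def hsh (h : ℕ → ℕ) (i : ℕ) : ℕ := if i = 0 then h 1 else h i + h (i+1)

/-- predicted Hilbert function -/
def FF : ℕ → ℤ → (ℕ → ℕ) → ℕ → ℤ
  | 0, l, _, _ => l
  | d+1, l, h, n => h 0 + ∑ k ∈ range (n+1), FF d (l - h 0) (hsh h) k

/-- the weighted sum -/
def wsum (d : ℕ) (h : ℕ → ℕ) : ℤ := ∑ i ∈ range d, ((d-1).choose i : ℤ) * h i

theorem wsum_succ (d : ℕ) (h : ℕ → ℕ) : (h 0 : ℤ) + wsum d (hsh h) = wsum (d+1) h := by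
  cases d with
  | zero => simp [wsum]
  | succ d =>
    have e : ∀ i, (hsh h i : ℤ) = (if i = 0 then 0 else (h i : ℤ)) + h (i+1) := by
      intro i; by_cases hi : i = 0 <;> simp [hsh, hi]
    simp only [wsum, Nat.add_sub_cancel, e, mul_add, sum_add_distrib]
    rw [sum_range_succ' (fun i => ((d+1).choose i : ℤ) * h i) (d+1)]
    simp only [Nat.choose_succ_succ, Nat.cast_add, add_mul, sum_add_distrib]
    rw [sum_range_succ' (fun i => (d.choose i : ℤ) * (if i = 0 then 0 else (h i : ℤ)))]
    rw [sum_range_succ (fun i => (d.choose (i+1) : ℤ) * h (i+1))]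
    simp
    ring
end LCB

end

noncomputable section
namespace LCB
section
variable {R : Type u} [CommRing R]

theorem avoid_fin (T : Finset (Ideal R)) (J : Ideal R) (hp : ∀ p ∈ T, p.IsPrime) (h : ∀ p ∈ T, ¬ J ≤ p) :
   ∃ c ∈ J, ∀ p ∈ T, c ∉ p := by
  by_contra! hcon
  have hsub : (J : Set R) ⊆ ⋃ p ∈ (T : Set (Ideal R)), ((id p : Ideal R) : Set R) := by
    intro c hc
    obtain ⟨p, h1, h2⟩ := hcon c hc
    exact Set.mem_biUnion h1 h2
  obtain ⟨p, hpT, hle⟩ := (Ideal.subset_union_prime ⊥ ⊥ (fun p hpT _ _ => hp p hpT)).1 hsub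
  exact h p hpT hle

theorem avoid_aux (B P : Ideal R) : B * P ≤ B ⊓ P := Ideal.mul_le_inf

theorem coset_avoid (S : Set (Ideal R)) (hS : S.Finite) (hp : ∀ p ∈ S, p.IsPrime) (a : R) (B : Ideal R)
    (h : ∀ p ∈ S, a ∈ p → ¬ B ≤ p) : ∃ c ∈ B, ∀ p ∈ S, a + c ∉ p := by
  classical
  obtain ⟨Mx, hMx⟩ : ∃ Mx : Set (Ideal R), ∀ p, p ∈ Mx ↔ Maximal (· ∈ S) p := ⟨{p | Maximal (· ∈ S) p}, fun _ => Iff.rfl⟩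
  have hMS : Mx ⊆ S := fun p hp => ((hMx p).1 hp).1
  have hMf : Mx.Finite := hS.subset hMS
  obtain ⟨T, hT⟩ : ∃ T : Finset (Ideal R), ∀ p, p ∈ T ↔ p ∈ Mx ∧ a ∈ p :=
    ⟨hMf.toFinset.filter (fun p => a ∈ p), fun p => by rw [Finset.mem_filter, Set.Finite.mem_toFinset]⟩
  obtain ⟨U, hU⟩ : ∃ T : Finset (Ideal R), ∀ p, p ∈ T ↔ p ∈ Mx ∧ a ∉ p :=
    ⟨hMf.toFinset.filter (fun p => a ∉ p), fun p => by rw [Finset.mem_filter, Set.Finite.mem_toFinset]⟩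
  obtain ⟨P, hP1, hP2⟩ : ∃ P : Ideal R, (∀ q ∈ U, P ≤ q) ∧ ∀ p : Ideal R, p.IsPrime → P ≤ p → ∃ q ∈ U, q ≤ p :=
    ⟨∏ q ∈ U, q, fun q hq => Ideal.prod_le_inf.trans (Finset.inf_le (f := fun q => q) hq), fun p hp h => hp.prod_le.1 h⟩
  have key : ∀ p ∈ T, ¬ (B * P) ≤ p := by
    intro p hpT hle
    obtain ⟨hpM, hap⟩ := (hT p).1 hpT
    have hpp := hp p (hMS hpM)
    rcases (hpp.mul_le).1 hle with h1 | h1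
    · exact h p (hMS hpM) hap h1
    · obtain ⟨q, hq, hqp⟩ := hP2 p hpp h1
      obtain ⟨hqM, haq⟩ := (hU q).1 hq
      have := ((hMx q).1 hqM).2 (hMS hpM) hqp
      exact haq (this hap)
  obtain ⟨c, hc, hcT⟩ := avoid_fin T (B * P) (fun p hpT => hp p (hMS ((hT p).1 hpT).1)) key
  have hcBP : c ∈ B ⊓ P := avoid_aux B P hc
  have hcB : c ∈ B := hcBP.1
  have hcP : c ∈ P := hcBP.2
  refine ⟨c, hcB, ?_⟩
  have main : ∀ p ∈ Mx, a + c ∉ p := by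
    intro p hpM hac
    by_cases hap : a ∈ p
    · exact hcT p ((hT p).2 ⟨hpM, hap⟩) ((Ideal.add_mem_iff_right _ hap).1 hac)
    · have : c ∈ p := by
        exact hP1 p ((hU p).2 ⟨hpM, hap⟩) hcP
      exact hap ((Ideal.add_mem_iff_left _ this).1 hac)
  intro p hpS hac
  obtain ⟨q, hpq, hq⟩ := hS.exists_le_maximal hpS
  exact main q ((hMx q).2 hq) (hpq hac)

variable {M : Type u} [AddCommGroup M] [Module R M]

variable (M) in
/-- a weak d-sequence type condition -/
def QQ (I : Ideal R) : List R → Ideal R → Prop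
  | [], _ => True
  | a :: as, A => (∀ z ∈ I • (⊤ : Submodule R M), a • z ∈ A • (⊤ : Submodule R M) → z ∈ A • (⊤ : Submodule R M)) ∧
      QQ I as (A ⊔ Ideal.span {a})

theorem QQ_transfer {M' : Type u} [AddCommGroup M'] [Module R M'] (π : M →ₗ[R] M') (hπ : Function.Surjective π)
    (I : Ideal R) (as : List R) : ∀ (A : Ideal R), A ≤ I → (∀ a ∈ as, a ∈ I) →
    (LinearMap.ker π ⊓ I • (⊤ : Submodule R M) ≤ A • (⊤ : Submodule R M)) → QQ M' I as A → QQ M I as A := by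
  induction as with
  | nil => intro A _ _ _ _; trivial
  | cons a as ih =>
    intro A hA has hK hQ
    have hm : ∀ X : Ideal R, Submodule.map π (X • (⊤ : Submodule R M)) = X • (⊤ : Submodule R M') := by
      intro X
      rw [Submodule.map_smul'', Submodule.map_top, LinearMap.range_eq_top.2 hπ]
    refine ⟨?_, ih _ ?_ ?_ ?_ hQ.2⟩
    · intro z hz haz
      have h1 := hQ.1 (π z) (hm I ▸ Submodule.mem_map_of_mem hz) (by
        rw [← map_smul]; exact hm A ▸ Submodule.mem_map_of_mem haz)
      rw [← hm A] at h1
      obtain ⟨w, hw, hwz⟩ := h1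
      have h2 : z - w ∈ A • (⊤ : Submodule R M) := hK ⟨by
        rw [SetLike.mem_coe, LinearMap.mem_ker, map_sub, hwz, sub_self], Submodule.sub_mem _ hz (Submodule.smul_mono hA le_rfl hw)⟩
      have := Submodule.add_mem _ h2 hw
      rwa [sub_add_cancel] at this
    · exact sup_le hA ((Ideal.span_singleton_le_iff_mem _).2 (has a (by simp)))
    · exact fun b hb => has b (by simp [hb])
    · exact hK.trans (Submodule.smul_mono le_sup_left le_rfl)

theorem mem_sup_span_smul {A : Ideal R} {a : R} {N : Submodule R M} {y : M} (h : y ∈ (A ⊔ Ideal.span {a}) • N) :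
    ∃ u ∈ A • N, ∃ z ∈ N, y = u + a • z := by
  rw [Submodule.sup_smul] at h
  obtain ⟨u, hu, v, hv, rfl⟩ := Submodule.mem_sup.1 h
  rw [Submodule.ideal_span_singleton_smul] at hv
  obtain ⟨z, hz, rfl⟩ := (Submodule.mem_smul_pointwise_iff_exists _ _ _).1 hv
  exact ⟨u, hu, z, hz, rfl⟩

theorem lemD (I : Ideal R) (as : List R) : ∀ A : Ideal R, I = A ⊔ Ideal.span {a | a ∈ as} → QQ M I as A → ∀ n,
    A • (⊤ : Submodule R M) ⊓ I^(n+1) • (⊤ : Submodule R M) ≤ A • (I^n • (⊤ : Submodule R M)) := by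
  induction as with
  | nil =>
    intro A hI _ n
    have : I = A := by simpa using hI
    subst this
    rw [pow_succ', mul_smul]
    exact inf_le_right
  | cons a as ih =>
    intro A hI hQ n
    have hIA := ih (A ⊔ Ideal.span {a}) (by
      rw [hI, sup_assoc, ← Ideal.span_union]
      congr 2
      ext; simp) hQ.2
    have haI : a ∈ I := by
      rw [hI]; exact Ideal.mem_sup_right (Ideal.subset_span (by simp))
    induction n with
    | zero => simp
    | succ n ihn =>
      rintro y ⟨hy1, hy2⟩
      have h1 := hIA (n+1) ⟨Submodule.smul_mono le_sup_left le_rfl hy1, hy2⟩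
      obtain ⟨u, hu, z, hz, rfl⟩ := mem_sup_span_smul h1
      have hu' : u ∈ A • (⊤ : Submodule R M) := Submodule.smul_mono le_rfl le_top hu
      have haz : a • z ∈ A • (⊤ : Submodule R M) := (Submodule.add_mem_iff_right _ hu').1 hy1
      have hzI : z ∈ I • (⊤ : Submodule R M) := Submodule.smul_mono (Ideal.pow_le_self (by omega)) le_rfl hz
      have h3 := ihn ⟨hQ.1 z hzI haz, hz⟩
      refine Submodule.add_mem _ hu ?_
      have : a • z ∈ I • (A • (I^n • (⊤ : Submodule R M))) := Submodule.smul_mem_smul haI h3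
      rw [← mul_smul, ← mul_smul] at this
      rwa [← mul_smul, pow_succ', ← mul_assoc, mul_comm A I]
end
end LCB

end

noncomputable section
namespace LCB
open scoped Pointwise
section
variable {R : Type u} [CommRing R] {M : Type u} [AddCommGroup M] [Module R M]

theorem len_ker {A B : Type u} [AddCommGroup A] [Module R A] [AddCommGroup B] [Module R B] {C : Type u}
    [AddCommGroup C] [Module R C] (f : A →ₗ[R] B) (g : B →ₗ[R] C) (hfg : LinearMap.range f = LinearMap.ker g) (hg : Function.Surjective g) :
    Module.length R B + Module.length R (LinearMap.ker f) = Module.length R C + Module.length R A := by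
  have h1 : Module.length R B = Module.length R (LinearMap.ker g) + Module.length R C :=
    Module.length_eq_add_of_exact (LinearMap.ker g).subtype g Subtype.val_injective hg (LinearMap.exact_subtype_ker_map g)
  have h2 : Module.length R A = Module.length R (LinearMap.ker f) + Module.length R (LinearMap.range f) :=
    Module.length_eq_add_of_exact (LinearMap.ker f).subtype f.rangeRestrict Subtype.val_injective (LinearMap.surjective_rangeRestrict _) (by
      intro x
      constructor
      · intro h; exact ⟨⟨x, congrArg Subtype.val h⟩, rfl⟩
      · rintro ⟨y, rfl⟩; exact Subtype.ext y.2)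
  rw [h1, h2, hfg]
  ring

theorem len_gen {ι : Type} [Fintype ι] (a : ι → R) (W V : Submodule R M) (h : ∀ i, ∀ w ∈ W, a i • w ∈ V) :
    Module.length R (Submodule.map V.mkQ (Ideal.span (Set.range a) • (⊤ : Submodule R M))) ≤
      Fintype.card ι * Module.length R (M ⧸ W) := by
  classical
  let f : (ι → (M ⧸ W)) →ₗ[R] (M ⧸ V) := ∑ i, (W.mapQ V (LinearMap.lsmul R M (a i)) (h i)) ∘ₗ LinearMap.proj i
  have hf : Submodule.map V.mkQ (Ideal.span (Set.range a) • (⊤ : Submodule R M)) ≤ LinearMap.range f := by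
    rw [Submodule.map_le_iff_le_comap, Submodule.span_smul_eq, Submodule.set_smul_le_iff]
    rintro _ m ⟨i, rfl⟩ _
    refine ⟨Pi.single i (W.mkQ m), ?_⟩
    rw [LinearMap.sum_apply, Finset.sum_eq_single i]
    · simp only [LinearMap.comp_apply, LinearMap.proj_apply, Pi.single_eq_same]
      rfl
    · intro j _ hj
      simp [Pi.single_eq_of_ne hj]
    · simp
  calc _ ≤ Module.length R (LinearMap.range f) := Module.length_le_of_injective (Submodule.inclusion hf) (Submodule.inclusion_injective hf)
    _ ≤ Module.length R (ι → (M ⧸ W)) := Module.length_le_of_surjective f.rangeRestrict (LinearMap.surjective_rangeRestrict _)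
    _ = _ := by rw [Module.length_pi]; simp

theorem span_pow_gen {d : ℕ} (b : Fin d → R) (r : ℕ) : Ideal.span (Set.range b) ^ r =
    Ideal.span (Set.range (fun s : Sym (Fin d) r => ((s : Multiset (Fin d)).map b).prod)) := by
  rw [Ideal.span, Submodule.span_pow]
  refine le_antisymm (Submodule.span_mono ?_) (Submodule.span_mono ?_)
  · intro y hy
    rw [Set.mem_pow] at hy
    obtain ⟨f, rfl⟩ := hy
    choose g hg using fun i => (f i).2
    refine ⟨⟨(List.ofFn g : Multiset (Fin d)), by simp⟩, ?_⟩
    simp [List.map_ofFn, Function.comp_def, hg]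
  · rintro _ ⟨⟨s, hs⟩, rfl⟩
    induction s using Quotient.inductionOn with
    | h l =>
    rw [Set.mem_pow]
    have hs' : l.length = r := by simpa using hs
    subst hs'
    refine ⟨fun i => ⟨b (l.get i), ⟨_, rfl⟩⟩, ?_⟩
    simp

theorem len_pow {d : ℕ} (b : Fin d → R) (r : ℕ) (W V : Submodule R M) (h : Ideal.span (Set.range b) ^ r • W ≤ V) :
    Module.length R (Submodule.map V.mkQ (Ideal.span (Set.range b) ^ r • (⊤ : Submodule R M))) ≤
      Nat.multichoose d r * Module.length R (M ⧸ W) := by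
  have := len_gen (fun s : Sym (Fin d) r => ((s : Multiset (Fin d)).map b).prod) W V (by
    intro s w hw
    refine h (Submodule.smul_mem_smul ?_ hw)
    rw [span_pow_gen]
    exact Ideal.subset_span ⟨s, rfl⟩)
  rw [← span_pow_gen] at this
  rwa [Sym.card_sym_eq_multichoose, Fintype.card_fin] at this

theorem len_quot_mono {W V : Submodule R M} (h : W ≤ V) : Module.length R (M ⧸ V) ≤ Module.length R (M ⧸ W) :=
  Module.length_le_of_surjective (Submodule.factor h) (Submodule.factor_surjective h)

theorem len_sub_mono {W V : Submodule R M} (h : W ≤ V) : Module.length R W ≤ Module.length R V :=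
  Module.length_le_of_injective (Submodule.inclusion h) (Submodule.inclusion_injective h)

theorem len_quot_add {W V : Submodule R M} (h : W ≤ V) : 
    Module.length R (M ⧸ W) = Module.length R (Submodule.map W.mkQ V) + Module.length R (M ⧸ V) := by
  refine Module.length_eq_add_of_exact (Submodule.map W.mkQ V).subtype (Submodule.factor h) Subtype.val_injective (Submodule.factor_surjective h) ?_
  rw [LinearMap.exact_iff, Submodule.range_subtype]
  ext z
  obtain ⟨z, rfl⟩ := Submodule.Quotient.mk_surjective _ z
  rw [LinearMap.mem_ker]
  change Submodule.Quotient.mk z = 0 ↔ _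
  rw [Submodule.Quotient.mk_eq_zero]
  constructor
  · intro hz; exact ⟨z, hz, rfl⟩
  · rintro ⟨v, hv, hvz⟩
    have : v - z ∈ W := (Submodule.Quotient.eq W).1 hvz
    have := Submodule.sub_mem _ hv (h this)
    rwa [sub_sub_cancel] at this

/-- finiteness of all lengths -/
theorem len_fin [IsNoetherianRing R] (I : Ideal R) (h : Module.length R (M ⧸ (I • (⊤ : Submodule R M))) ≠ ⊤) (n : ℕ) :
    Module.length R (M ⧸ (I^n • (⊤ : Submodule R M))) ≠ ⊤ := by
  induction n with
  | zero =>
    have : Module.length R (M ⧸ (I^0 • (⊤ : Submodule R M))) = 0 := by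
      rw [Module.length_eq_zero_iff, pow_zero, Ideal.one_eq_top, Submodule.top_smul]
      exact Submodule.Quotient.subsingleton_iff.2 rfl
    rw [this]; simp
  | succ n ih =>
    have hle : I^(n+1) • (⊤ : Submodule R M) ≤ I^n • (⊤ : Submodule R M) := Submodule.smul_mono (Ideal.pow_le_pow_right (by omega)) le_rfl
    rw [len_quot_add hle]
    obtain ⟨s, hs⟩ := (inferInstance : IsNoetherian R R).noetherian (I^n)
    have := len_gen (fun i : Fin s.card => (s.equivFin.symm i : R)) (I • ⊤) (I^(n+1) • (⊤ : Submodule R M)) (by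
      intro i w hw
      rw [pow_succ, mul_smul]
      refine Submodule.smul_mem_smul ?_ hw
      rw [← hs]; exact Submodule.subset_span (s.equivFin.symm i).2)
    have e : Ideal.span (Set.range (fun i : Fin s.card => (s.equivFin.symm i : R))) = I^n := by
      rw [← hs, Ideal.span]
      congr 1
      ext x
      constructor
      · rintro ⟨i, rfl⟩; exact (s.equivFin.symm i).2
      · intro hx; exact ⟨s.equivFin ⟨x, hx⟩, by simp⟩
    rw [e] at this
    refine WithTop.add_ne_top.2 ⟨ne_top_of_le_ne_top ?_ this, ih⟩
    exact WithTop.mul_ne_top (ENat.natCast_ne_top _) h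

/-- kernel sequence -/
theorem len_x (I : Ideal R) (x : R) (hx : x ∈ I) (k : ℕ) : 
    ∃ K : Submodule R (M ⧸ (I^k • (⊤ : Submodule R M))), 
      (∀ z : M, Submodule.Quotient.mk z ∈ K ↔ x • z ∈ I^(k+1) • (⊤ : Submodule R M)) ∧
    Module.length R (M ⧸ (I^(k+1) • (⊤ : Submodule R M))) + Module.length R K =
     Module.length R (QuotSMulTop x M ⧸ (I^(k+1) • (⊤ : Submodule R (QuotSMulTop x M)))) + Module.length R (M ⧸ (I^k • (⊤ : Submodule R M))) := by
  have h1 : I^k • (⊤ : Submodule R M) ≤ Submodule.comap (LinearMap.lsmul R M x) (I^(k+1) • ⊤) := by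
    intro z hz
    rw [Submodule.mem_comap, LinearMap.lsmul_apply, pow_succ', mul_smul]
    exact Submodule.smul_mem_smul hx hz
  have hm : Submodule.map (Submodule.mkQ (x • (⊤ : Submodule R M))) (I^(k+1) • (⊤ : Submodule R M)) = I^(k+1) • (⊤ : Submodule R (QuotSMulTop x M)) := by
    rw [Submodule.map_smul'', Submodule.map_top, LinearMap.range_eq_top.2 (Submodule.mkQ_surjective _)]
  have h2 : I^(k+1) • (⊤ : Submodule R M) ≤ Submodule.comap (Submodule.mkQ (x • (⊤ : Submodule R M))) (I^(k+1) • ⊤) := by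
    rw [← Submodule.map_le_iff_le_comap, hm]
  let f := Submodule.mapQ _ _ _ h1
  let g := Submodule.mapQ _ _ _ h2
  refine ⟨LinearMap.ker f, fun z => ?_, len_ker f g ?_ ?_⟩
  · rw [LinearMap.mem_ker]
    change Submodule.Quotient.mk _ = 0 ↔ _
    rw [Submodule.Quotient.mk_eq_zero]
    rfl
  · ext y
    obtain ⟨y, rfl⟩ := Submodule.Quotient.mk_surjective _ y
    rw [LinearMap.mem_ker]
    change _ ↔ Submodule.Quotient.mk _ = 0
    rw [Submodule.Quotient.mk_eq_zero, ← hm]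
    constructor
    · rintro ⟨z, hz⟩
      obtain ⟨z, rfl⟩ := Submodule.Quotient.mk_surjective _ z
      have := (Submodule.Quotient.eq _).1 hz
      refine ⟨_, (Submodule.neg_mem_iff _).2 this, ?_⟩
      refine (Submodule.Quotient.eq _).2 ?_
      rw [Submodule.mem_smul_pointwise_iff_exists]
      exact ⟨-z, trivial, by simp⟩
    · rintro ⟨w, hw, hwy⟩
      have := (Submodule.Quotient.eq _).1 hwy
      obtain ⟨z, _, hz⟩ := (Submodule.mem_smul_pointwise_iff_exists _ _ _).1 this
      refine ⟨Submodule.Quotient.mk (-z), ?_⟩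
      refine (Submodule.Quotient.eq _).2 ?_
      have e : (LinearMap.lsmul R M x) (-z) - y = - w := by
        simp only [LinearMap.lsmul_apply, smul_neg]
        rw [hz]; abel
      rw [e]
      exact Submodule.neg_mem _ hw
  · intro z
    obtain ⟨z, rfl⟩ := Submodule.Quotient.mk_surjective _ z
    obtain ⟨z, rfl⟩ := Submodule.Quotient.mk_surjective _ z
    exact ⟨Submodule.Quotient.mk z, rfl⟩
end
end LCB

end

noncomputable section
namespace LCB
open scoped Pointwise
section
variable {R : Type u} [CommRing R] {M : Type u} [AddCommGroup M] [Module R M]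

theorem len_surj {M' : Type u} [AddCommGroup M'] [Module R M'] (π : M →ₗ[R] M') (hπ : Function.Surjective π) (J : Ideal R) :
    Module.length R (M' ⧸ (J • (⊤ : Submodule R M'))) ≤ Module.length R (M ⧸ (J • (⊤ : Submodule R M))) := by
  refine Module.length_le_of_surjective (Submodule.mapQ _ _ π ?_) ?_
  · rw [← Submodule.map_le_iff_le_comap, Submodule.map_smul'']
    exact Submodule.smul_mono le_rfl le_top
  · intro z
    obtain ⟨z, rfl⟩ := Submodule.Quotient.mk_surjective _ z
    obtain ⟨z, rfl⟩ := hπ z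
    exact ⟨Submodule.Quotient.mk z, rfl⟩

theorem len_H (H V : Submodule R M) : Module.length R H = Module.length R (Submodule.map V.mkQ H) + Module.length R (H ⊓ V : Submodule R M) := by
  have := Module.length_eq_add_of_exact (Submodule.inclusion (inf_le_left : H ⊓ V ≤ H)) ((V.mkQ.domRestrict H).codRestrict (Submodule.map V.mkQ H) (fun z => ⟨z.1, z.2, rfl⟩))
    (Submodule.inclusion_injective _) (by
      rintro ⟨_, z, hz, rfl⟩
      exact ⟨⟨z, hz⟩, rfl⟩) (by
      intro z
      constructor
      · intro h
        have h2 : Submodule.Quotient.mk (p := V) z.1 = 0 := congrArg Subtype.val h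
        rw [Submodule.Quotient.mk_eq_zero] at h2
        exact ⟨⟨z.1, z.2, h2⟩, rfl⟩
      · rintro ⟨y, rfl⟩
        refine Subtype.ext ?_
        change Submodule.Quotient.mk (p := V) y.1 = 0
        rw [Submodule.Quotient.mk_eq_zero]
        exact y.2.2)
  rw [this, add_comm]

theorem len_quotH (H : Submodule R M) (J : Ideal R) : Module.length R (M ⧸ (J • (⊤ : Submodule R M))) =
    Module.length R (Submodule.map (J • (⊤ : Submodule R M)).mkQ H) + Module.length R ((M ⧸ H) ⧸ (J • (⊤ : Submodule R (M ⧸ H)))) := by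
  rw [len_quot_add (le_sup_left : J • (⊤ : Submodule R M) ≤ J • (⊤ : Submodule R M) ⊔ H)]
  congr 1
  · rw [Submodule.map_sup]
    have : Submodule.map (J • (⊤ : Submodule R M)).mkQ (J • ⊤) = ⊥ := by
      rw [eq_bot_iff]
      rintro _ ⟨z, hz, rfl⟩
      exact (Submodule.Quotient.mk_eq_zero _).2 hz
    rw [this, bot_sup_eq]
  · have hm : Submodule.map H.mkQ (J • (⊤ : Submodule R M)) = J • (⊤ : Submodule R (M ⧸ H)) := by
      rw [Submodule.map_smul'', Submodule.map_top, LinearMap.range_eq_top.2 (Submodule.mkQ_surjective _)]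
    rw [← hm, (Submodule.quotientQuotientEquivQuotientSup H (J • ⊤)).length_eq, sup_comm]

theorem pow_kill (A0 J : Ideal R) (hA : A0 • (⊤ : Submodule R M) = ⊥) (k : ℕ) :
    (A0 ⊔ J)^k • (⊤ : Submodule R M) ≤ J^k • (⊤ : Submodule R M) := by
  induction k with
  | zero => simp
  | succ k ih =>
    rw [pow_succ', pow_succ', mul_smul, mul_smul, Submodule.sup_smul]
    refine sup_le ?_ (Submodule.smul_mono le_rfl ih)
    refine (Submodule.smul_mono le_rfl le_top).trans ?_
    rw [hA]; exact bot_le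

theorem pow_sup_le (X B : Ideal R) (k : ℕ) : (X ⊔ B)^(k+1) ≤ X * (X ⊔ B)^k ⊔ B^(k+1) := by
  induction k with
  | zero => simp
  | succ k ih =>
    rw [pow_succ' _ (k+1), Ideal.sup_mul]
    refine sup_le le_sup_left ?_
    refine (Ideal.mul_mono_right ih).trans ?_
    rw [Ideal.mul_sup, ← pow_succ']
    refine sup_le_sup_right ?_ _
    rw [mul_left_comm, pow_succ' _ k]
    exact Ideal.mul_mono_right (Ideal.mul_mono_left le_sup_right)

theorem colon_bound [IsNoetherianRing R] [Module.Finite R M] (A0 B I : Ideal R) (x : R) (hA : A0 • (⊤ : Submodule R M) = ⊥)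
    (hI : I = A0 ⊔ (Ideal.span {x} ⊔ B)) (hx : IsSMulRegular M x) :
    ∃ c, ∀ n, c ≤ n → ∀ z : M, x • z ∈ I^(n+1) • (⊤ : Submodule R M) →
      z ∈ I^n • (⊤ : Submodule R M) ⊔ B^(n-c) • (⊤ : Submodule R M) := by
  obtain ⟨c, hc⟩ := Ideal.exists_pow_inf_eq_pow_smul B (x • (⊤ : Submodule R M))
  refine ⟨c, fun n hn z hz => ?_⟩
  have hle : Ideal.span {x} ⊔ B ≤ I := hI ▸ le_sup_right
  rw [hI] at hz
  have h1 := pow_kill A0 _ hA (n+1) hz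
  have h2 := Submodule.smul_mono (pow_sup_le (Ideal.span {x}) B n) (le_refl (⊤ : Submodule R M)) h1
  rw [Submodule.sup_smul, mul_smul, Submodule.ideal_span_singleton_smul] at h2
  obtain ⟨u, hu, v, hv, huv⟩ := Submodule.mem_sup.1 h2
  obtain ⟨w, hw, rfl⟩ := (Submodule.mem_smul_pointwise_iff_exists _ _ _).1 hu
  have hv2 : v = x • (z - w) := by rw [smul_sub, ← huv]; abel
  have h3 : v ∈ B^(n+1) • (⊤ : Submodule R M) ⊓ x • (⊤ : Submodule R M) :=
    ⟨hv, (Submodule.mem_smul_pointwise_iff_exists _ _ _).2 ⟨z - w, trivial, hv2.symm⟩⟩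
  rw [hc (n+1) (by omega)] at h3
  have h4 := Submodule.smul_mono (le_refl (B^(n+1-c))) inf_le_right h3
  rw [← Submodule.ideal_span_singleton_smul, ← mul_smul, mul_comm, mul_smul, Submodule.ideal_span_singleton_smul] at h4
  obtain ⟨y, hy, hyv⟩ := (Submodule.mem_smul_pointwise_iff_exists _ _ _).1 h4
  have h5 : y = z - w := hx (hyv.trans hv2)
  have : z = w + y := by rw [h5]; abel
  rw [this]
  refine Submodule.add_mem_sup ?_ ?_
  · exact Submodule.smul_mono (Ideal.pow_right_mono hle n) le_rfl hw
  · exact Submodule.smul_mono (Ideal.pow_le_pow_right (by omega)) le_rfl hy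

variable (M) in
/-- Hilbert function, natural valued -/
def LL (I : Ideal R) (n : ℕ) : ℕ := (Module.length R (M ⧸ (I^(n+1) • (⊤ : Submodule R M)))).toNat

theorem LL_coe [IsNoetherianRing R] (I : Ideal R) (h : Module.length R (M ⧸ (I • (⊤ : Submodule R M))) ≠ ⊤) (n : ℕ) :
    (LL M I n : ℕ∞) = Module.length R (M ⧸ (I^(n+1) • (⊤ : Submodule R M))) :=
  ENat.natCast_toNat (len_fin I h _)

theorem prev_coe [IsNoetherianRing R] (I : Ideal R) (h : Module.length R (M ⧸ (I • (⊤ : Submodule R M))) ≠ ⊤) (n : ℕ) :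
    (prev (LL M I) n : ℕ∞) = Module.length R (M ⧸ (I^n • (⊤ : Submodule R M))) := by
  cases n with
  | zero =>
    have : Module.length R (M ⧸ (I^0 • (⊤ : Submodule R M))) = 0 := by
      rw [Module.length_eq_zero_iff, pow_zero, Ideal.one_eq_top, Submodule.top_smul]
      exact Submodule.Quotient.subsingleton_iff.2 rfl
    rw [this]; simp [prev]
  | succ n => simp [prev, LL_coe I h]

theorem mainseq [IsNoetherianRing R] [Module.Finite R M] (I : Ideal R) (x : R) (hxI : x ∈ I)
    (h : Module.length R (M ⧸ (I • (⊤ : Submodule R M))) ≠ ⊤) : ∃ ε : ℕ → ℕ,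
    (∀ n, LL M I n + ε n = LL (QuotSMulTop x M) I n + prev (LL M I) n) ∧ ε 0 = 0 ∧
    ((∀ n, ∀ z : M, x • z ∈ I^(n+1) • (⊤ : Submodule R M) → z ∈ I^n • (⊤ : Submodule R M)) → ∀ n, ε n = 0) ∧
    (∀ (A0 : Ideal R) (d : ℕ) (b : Fin d → R), A0 • (⊤ : Submodule R M) = ⊥ →
      I = A0 ⊔ (Ideal.span {x} ⊔ Ideal.span (Set.range b)) → IsSMulRegular M x → 
      ∃ C c0, (∀ n, n < c0 → ε n ≤ C) ∧ (∀ n, c0 ≤ n → ε n ≤ C * Nat.multichoose d (n - c0))) := by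
  choose K hK1 hK2 using fun k => len_x (M := M) I x hxI k
  have hKle : ∀ n, Module.length R (K n) ≤ Module.length R (M ⧸ (I^n • (⊤ : Submodule R M))) := fun n =>
    Module.length_le_of_injective (K n).subtype Subtype.val_injective
  have hKfin : ∀ n, Module.length R (K n) ≠ ⊤ := fun n => ne_top_of_le_ne_top (len_fin I h n) (hKle n)
  have h' : Module.length R (QuotSMulTop x M ⧸ (I • (⊤ : Submodule R (QuotSMulTop x M)))) ≠ ⊤ :=
    ne_top_of_le_ne_top h (len_surj (Submodule.mkQ _) (Submodule.mkQ_surjective _) I)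
  have hc : ∀ n, (((Module.length R (K n)).toNat : ℕ) : ℕ∞) = Module.length R (K n) := fun n => ENat.natCast_toNat (hKfin n)
  refine ⟨fun n => (Module.length R (K n)).toNat, ?_, ?_, ?_, ?_⟩
  · intro n
    have := hK2 n
    rw [← LL_coe I h, ← LL_coe I h', ← prev_coe I h, ← hc] at this
    exact_mod_cast this
  · have := hKle 0
    rw [← prev_coe I h, ← hc] at this
    simpa [prev] using this
  · intro hz n
    have : Module.length R (K n) = 0 := by
      rw [Module.length_eq_zero_iff]
      refine subsingleton_of_forall_eq 0 ?_
      rintro ⟨z, hzK⟩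
      obtain ⟨z, rfl⟩ := Submodule.Quotient.mk_surjective _ z
      refine Subtype.ext ?_
      exact (Submodule.Quotient.mk_eq_zero _).2 (hz n z ((hK1 n z).1 hzK))
    simp [this]
  · intro A0 d b hA hI hreg
    obtain ⟨c, hcb⟩ := colon_bound A0 (Ideal.span (Set.range b)) I x hA hI hreg
    refine ⟨(Module.length R (M ⧸ (I^c • (⊤ : Submodule R M)))).toNat, c, ?_, ?_⟩
    · intro n hn
      refine ENat.toNat_le_toNat ((hKle n).trans (len_quot_mono ?_)) (len_fin I h c)
      exact Submodule.smul_mono (Ideal.pow_le_pow_right (by omega)) le_rfl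
    · intro n hn
      have h1 : K n ≤ Submodule.map (I^n • (⊤ : Submodule R M)).mkQ (Ideal.span (Set.range b)^(n-c) • ⊤) := by
        intro z hz
        obtain ⟨z, rfl⟩ := Submodule.Quotient.mk_surjective _ z
        obtain ⟨u, hu, v, hv, rfl⟩ := Submodule.mem_sup.1 (hcb n hn z ((hK1 n z).1 hz))
        refine ⟨v, hv, ?_⟩
        refine (Submodule.Quotient.eq _).2 ?_
        have : v - (u + v) = -u := by abel
        rw [this]
        exact Submodule.neg_mem _ hu
      have h2 := (len_sub_mono h1).trans (len_pow b (n-c) (I^c • ⊤) (I^n • (⊤ : Submodule R M)) (by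
        rw [← mul_smul]
        refine Submodule.smul_mono ?_ le_rfl
        have hb : Ideal.span (Set.range b) ≤ I := hI ▸ (le_sup_right.trans le_sup_right)
        calc _ ≤ I^(n-c) * I^c := Ideal.mul_mono_left (Ideal.pow_right_mono hb _)
          _ = I^n := by rw [← pow_add]; congr 1; omega))
      rw [← hc, ← ENat.natCast_toNat (len_fin I h c)] at h2
      rw [mul_comm]
      exact_mod_cast h2
end
end LCB

end

noncomputable section
namespace LCB
open scoped Pointwise
open CategoryTheory IsLocalRing
section
variable {R : Type u} [CommRing R] {M : Type u} [AddCommGroup M] [Module R M]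

theorem Hl0_of_reg (J : Ideal R) (y : R) (hy : y ∈ J) (hreg : IsSMulRegular M y) : Hl J 0 M = 0 := by
  refine Module.length_eq_zero_iff.2 (subsingleton_of_forall_eq 0 fun z => ?_)
  obtain ⟨n, ξ, rfl⟩ := Module.DirectLimit.exists_of z
  have : ξ = 0 := by
    rw [← Abelian.Ext.mk₀_homEquiv₀_apply ξ, Abelian.Ext.mk₀_eq_zero_iff]
    set f := Abelian.Ext.homEquiv₀ ξ
    refine ModuleCat.hom_ext (LinearMap.ext fun x => ?_)
    have h1 : y^n • (f.hom x : M) = 0 := by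
      have h2 : f.hom (y^n • x) = y^n • f.hom x := map_smul f.hom _ _
      have h3 : y^n • x = 0 := by
        obtain ⟨r, rfl⟩ := Submodule.Quotient.mk_surjective _ x
        refine (Submodule.Quotient.mk_eq_zero (J^n)).2 ?_
        exact Ideal.mul_mem_right _ _ (Ideal.pow_mem_pow hy n)
      rw [h3] at h2
      exact h2.symm.trans (map_zero f.hom)
    exact (hreg.pow n).right_eq_zero_of_smul h1
  rw [this, map_zero]

variable [IsLocalRing R] [IsNoetherianRing R] [Module.Finite R M]

theorem fin_len_kill (h : Module.length R M ≠ ⊤) : ∃ c, (maximalIdeal R)^c ≤ Module.annihilator R M := by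
  have hfl := Module.length_ne_top_iff.1 h
  have := (isFiniteLength_iff_isNoetherian_isArtinian.1 hfl).2
  obtain ⟨n, hn⟩ := IsArtinian.monotone_stabilizes (R := R) (M := M) ⟨fun n => OrderDual.toDual ((maximalIdeal R)^n • (⊤ : Submodule R M)), by
    intro a b hab
    exact Submodule.smul_mono (Ideal.pow_le_pow_right hab) (le_refl (⊤ : Submodule R M))⟩
  have h1 : (maximalIdeal R)^n • (⊤ : Submodule R M) = (maximalIdeal R)^(n+1) • (⊤ : Submodule R M) := hn (n+1) (by omega)
  have h2 := Submodule.eq_bot_of_le_smul_of_le_jacobson_bot (maximalIdeal R) ((maximalIdeal R)^n • (⊤ : Submodule R M))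
    (IsNoetherian.noetherian _) (by
      rw [← mul_smul, ← pow_succ', ← h1])
      (IsLocalRing.maximalIdeal_le_jacobson _)
  refine ⟨n, fun r hr => Module.mem_annihilator.2 fun m => ?_⟩
  have : r • m ∈ (maximalIdeal R)^n • (⊤ : Submodule R M) := Submodule.smul_mem_smul hr trivial
  rw [h2] at this
  exact this

theorem exists_x (A0 I B : Ideal R) (a : R) (hA : A0 • (⊤ : Submodule R M) = ⊥)
    (hI : I = A0 ⊔ (Ideal.span {a} ⊔ B)) (hfin : Module.length R (M ⧸ (I • (⊤ : Submodule R M))) ≠ ⊤)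
    (hM : ∀ z : M, (∀ r ∈ maximalIdeal R, r • z = 0) → z = 0) : ∃ c ∈ B, IsSMulRegular M (a + c) := by
  obtain ⟨c, hc, hcp⟩ := coset_avoid (associatedPrimes R M) (associatedPrimes.finite R M) (fun p hp => hp.isPrime) a B (by
    intro p hp hap hBp
    have hann : Module.annihilator R M ≤ p := by
      rw [← Submodule.annihilator_top]
      exact IsAssociatedPrime.annihilator_le hp
    have hIp : I ≤ p := by
      rw [hI]
      refine sup_le ?_ (sup_le ((Ideal.span_singleton_le_iff_mem _).2 hap) hBp)
      refine le_trans (fun r hr => Module.mem_annihilator.2 fun m => ?_) hann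
      have : r • m ∈ A0 • (⊤ : Submodule R M) := Submodule.smul_mem_smul hr trivial
      rw [hA] at this
      exact this
    obtain ⟨n, hn⟩ := fin_len_kill hfin
    have hpp : p.IsPrime := hp.isPrime
    refine ass_not_max hM p hp (hpp.le_of_pow_le (n := n) (hn.trans ?_))
    have hs : (⟨p, hpp⟩ : PrimeSpectrum R) ∈ Module.support R (M ⧸ (I • (⊤ : Submodule R M))) := by
      rw [Module.support_quotient]
      refine ⟨?_, hIp⟩
      rw [Module.support_eq_zeroLocus]
      exact hann
    rw [Module.support_eq_zeroLocus] at hs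
    exact hs)
  refine ⟨c, hc, ?_⟩
  by_contra hcon
  have : a + c ∈ ⋃ p ∈ associatedPrimes R M, (p : Set R) := by
    rw [biUnion_associatedPrimes_eq_compl_regular]
    exact hcon
  simp only [Set.mem_iUnion] at this
  obtain ⟨p, hp, h⟩ := this
  exact hcp p hp h

theorem main_ind (d : ℕ) : ∀ (M : Type u) [AddCommGroup M] [Module R M] [Module.Finite R M] (A0 I : Ideal R) (b : Fin d → R)
    (hh : ℕ → ℕ) (_ : A0 • (⊤ : Submodule R M) = ⊥) (_ : I = A0 ⊔ Ideal.span (Set.range b))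
    (_ : Module.length R (M ⧸ (I • (⊤ : Submodule R M))) ≠ ⊤) (_ : ∀ i < d, Hl (maximalIdeal R) i M ≤ hh i),
    GE d (LL M I) (LL M I 0 - wsum d hh) ∧ (¬ GE d (LL M I) (LL M I 0 - wsum d hh + 1) → 
      ∃ as : List R, I = A0 ⊔ Ideal.span {a | a ∈ as} ∧ QQ M I as A0 ∧ ∀ n, (LL M I n : ℤ) = FF d (LL M I 0) hh n) := by
  induction d with
  | zero =>
    intro M _ _ _ A0 I b hh hA hI hfin _
    have hIA : I = A0 := by rw [hI]; simp
    subst hIA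
    have hL : ∀ n, LL M I n = LL M I 0 := by
      have h0 : ∀ n, I^(n+1) • (⊤ : Submodule R M) = ⊥ := by
        intro n
        rw [pow_succ, mul_smul, hA, Submodule.smul_bot]
      have hVW : ∀ V W : Submodule R M, V = W → (Module.length R (M ⧸ V)).toNat = (Module.length R (M ⧸ W)).toNat := by
        rintro _ _ rfl; rfl
      intro n
      exact hVW _ _ ((h0 n).trans (h0 0).symm)
    refine ⟨⟨0, fun n => ?_⟩, fun _ => ⟨[], by simp, trivial, fun n => ?_⟩⟩
    · simp [wsum, hL n, Nat.multichoose_one]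
    · rw [hL n]; rfl
  | succ d ih =>
    intro M _ _ _ A0 I b hh hA hI hfin hHl
    have hI1 : I = A0 ⊔ (Ideal.span {b 0} ⊔ Ideal.span (Set.range (fun i : Fin d => b i.succ))) := by
      rw [hI, ← Ideal.span_union]
      congr 2
      ext y
      constructor
      · rintro ⟨i, rfl⟩
        refine Fin.cases ?_ (fun i => ?_) i
        · exact Or.inl rfl
        · exact Or.inr ⟨i, rfl⟩
      · rintro (h | ⟨i, rfl⟩)
        · exact ⟨0, h.symm⟩
        · exact ⟨i.succ, rfl⟩
    set b' : Fin d → R := fun i => b i.succ with hb'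
    have hAq : ∀ (N : Type u) [AddCommGroup N] [Module R N] (π : M →ₗ[R] N), Function.Surjective π → A0 • (⊤ : Submodule R N) = ⊥ := by
      intro N _ _ π hπ
      rw [← LinearMap.range_eq_top.2 hπ, ← Submodule.map_top, ← Submodule.map_smul'', hA, Submodule.map_bot]
    have hAb := hAq (M ⧸ H0 R M) (Submodule.mkQ _) (Submodule.mkQ_surjective _)
    have hfinb : Module.length R ((M ⧸ H0 R M) ⧸ (I • (⊤ : Submodule R (M ⧸ H0 R M)))) ≠ ⊤ :=
      ne_top_of_le_ne_top hfin (len_surj (Submodule.mkQ _) (Submodule.mkQ_surjective _) I)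
    have hMb := H0_quot (R := R) M
    obtain ⟨c, hcB, hreg⟩ := exists_x (M := M ⧸ H0 R M) A0 I _ (b 0) hAb hI1 hfinb hMb
    set x := b 0 + c with hx
    have hI2 : I = A0 ⊔ (Ideal.span {x} ⊔ Ideal.span (Set.range b')) := by
      rw [hI1]
      congr 1
      refine le_antisymm (sup_le ?_ le_sup_right) (sup_le ?_ le_sup_right)
      · rw [Ideal.span_singleton_le_iff_mem]
        have : b 0 = x - c := by rw [hx]; ring
        rw [this]
        exact Ideal.sub_mem _ (Ideal.mem_sup_left (Ideal.mem_span_singleton_self x)) (Ideal.mem_sup_right hcB)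
      · rw [Ideal.span_singleton_le_iff_mem]
        exact Ideal.add_mem _ (Ideal.mem_sup_left (Ideal.mem_span_singleton_self _)) (Ideal.mem_sup_right hcB)
    have hxI : x ∈ I := by
      rw [hI2]; exact Ideal.mem_sup_right (Ideal.mem_sup_left (Ideal.mem_span_singleton_self x))
    have hA0I : A0 ≤ I := hI ▸ le_sup_left
    obtain ⟨ε, hε1, hε0, hε2, hε3⟩ := mainseq (M := M ⧸ H0 R M) I x hxI hfinb
    obtain ⟨C, c0, hC1, hC2⟩ := hε3 A0 d b' hAb hI2 hreg
    let N := QuotSMulTop x (M ⧸ H0 R M)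
    have hπ : Function.Surjective ((Submodule.mkQ (x • (⊤ : Submodule R (M ⧸ H0 R M)))) ∘ₗ (H0 R M).mkQ) :=
      (Submodule.mkQ_surjective _).comp (Submodule.mkQ_surjective _)
    have hA' : (A0 ⊔ Ideal.span {x}) • (⊤ : Submodule R N) = ⊥ := by
      rw [Submodule.sup_smul, hAq N _ hπ, bot_sup_eq, eq_bot_iff, Submodule.ideal_span_singleton_smul]
      intro z hz
      obtain ⟨w, _, rfl⟩ := (Submodule.mem_smul_pointwise_iff_exists _ _ _).1 hz
      obtain ⟨w, rfl⟩ := Submodule.Quotient.mk_surjective _ w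
      exact (Submodule.Quotient.mk_eq_zero _).2 ((Submodule.mem_smul_pointwise_iff_exists _ _ _).2 ⟨w, trivial, rfl⟩)
    have hI3 : I = (A0 ⊔ Ideal.span {x}) ⊔ Ideal.span (Set.range b') := by rw [sup_assoc]; exact hI2
    have hfinN : Module.length R (N ⧸ (I • (⊤ : Submodule R N))) ≠ ⊤ :=
      ne_top_of_le_ne_top hfin (len_surj _ hπ I)
    obtain ⟨y, hym, hyreg⟩ := exists_reg_elt (M ⧸ H0 R M) hMb
    have hHl' : ∀ i < d, Hl (maximalIdeal R) i N ≤ hsh hh i := by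
      intro i hi
      refine (Hl_quot_reg (maximalIdeal R) (M ⧸ H0 R M) x hreg i).trans ?_
      have h1 := (Hl_quot_H0 M (i+1)).trans (hHl (i+1) (by omega))
      have h2 := (Hl_quot_H0 M i).trans (hHl i (by omega))
      by_cases hi0 : i = 0
      · subst hi0
        rw [Hl0_of_reg (maximalIdeal R) y hym hyreg, zero_add]
        simpa [hsh] using h1
      · simp only [hsh, if_neg hi0, Nat.cast_add]
        exact add_le_add h2 h1
    obtain ⟨ih1, ih2⟩ := ih N (A0 ⊔ Ideal.span {x}) I b' (hsh hh) hA' hI3 hfinN hHl'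
    have hH0 : Module.length R (H0 R M) ≤ hh 0 := (length_H0_le M).trans (hHl 0 (by omega))
    have hmapdef : ∀ n, ∃ t : ℕ, (t : ℕ∞) = Module.length R (Submodule.map (I^(n+1) • (⊤ : Submodule R M)).mkQ (H0 R M)) := by
      intro n
      refine ⟨_, ENat.natCast_toNat (ne_top_of_le_ne_top (ne_top_of_le_ne_top (ENat.coe_ne_top (hh 0)) hH0) ?_)⟩
      rw [len_H (H0 R M) (I^(n+1) • (⊤ : Submodule R M))]
      exact le_self_add
    choose t ht using hmapdef
    have hLt : ∀ n, LL M I n = t n + LL (M ⧸ H0 R M) I n := by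
      intro n
      have := len_quotH (H0 R M) (I^(n+1))
      rw [← ht, ← LL_coe I hfin, ← LL_coe I hfinb] at this
      exact_mod_cast this
    have hsum : ∀ n, (t n : ℕ∞) + Module.length R (H0 R M ⊓ I^(n+1) • (⊤ : Submodule R M) : Submodule R M) ≤ hh 0 := by
      intro n
      rw [ht, ← len_H]
      exact hH0
    have ht0 : t 0 ≤ hh 0 := by exact_mod_cast le_self_add.trans (hsum 0)
    have hN0 : LL (M ⧸ H0 R M) I 0 = LL N I 0 := by
      have := hε1 0
      simpa [hε0, prev] using this
    have hL0 : LL M I 0 = t 0 + LL N I 0 := by rw [hLt, hN0]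
    have hw := wsum_succ d hh
    have hc' : (LL N I 0 : ℤ) - wsum d (hsh hh) = (LL M I 0 - wsum (d+1) hh) + (hh 0 - t 0) := by
      rw [← hw, hL0]; push_cast; ring
    have key : ∀ c, GE d (LL N I) c → GE (d+1) (LL M I) c := fun c hc =>
      GE_mono_left (fun n => by rw [hLt]; omega) (GE_step d (LL (M ⧸ H0 R M) I) (LL N I) ε hε1 C c0 hC1 hC2 c hc)
    refine ⟨GE_mono (by rw [hc']; omega) (key _ ih1), fun hneg => ?_⟩
    have hth : t 0 = hh 0 := by
      by_contra hne
      refine hneg (GE_mono ?_ (key _ ih1))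
      rw [hc']; omega
    have hbot : H0 R M ⊓ I • (⊤ : Submodule R M) = ⊥ := by
      have h1 := hsum 0
      rw [hth, zero_add, pow_one] at h1
      have h2 : Module.length R (H0 R M ⊓ I • (⊤ : Submodule R M) : Submodule R M) = 0 := by
        have h3 : (hh 0 : ℕ∞) + Module.length R (H0 R M ⊓ I • (⊤ : Submodule R M) : Submodule R M) ≤ hh 0 + 0 := by simpa using h1
        exact le_antisymm ((ENat.add_le_add_iff_left (ENat.coe_ne_top _)).1 h3) (zero_le)
      rw [Module.length_eq_zero_iff] at h2
      exact Submodule.eq_bot_of_subsingleton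
    have hbotn : ∀ n, H0 R M ⊓ I^(n+1) • (⊤ : Submodule R M) = ⊥ := by
      intro n
      rw [eq_bot_iff, ← hbot]
      exact inf_le_inf_left _ (Submodule.smul_mono (Ideal.pow_le_self (by omega)) le_rfl)
    have htn : ∀ n, t n = hh 0 := by
      intro n
      have h1 : (t n : ℕ∞) = t 0 := by
        have e1 := len_H (H0 R M) (I^(n+1) • (⊤ : Submodule R M))
        have e2 := len_H (H0 R M) (I^(0+1) • (⊤ : Submodule R M))
        rw [hbotn, Module.length_bot, add_zero] at e1 e2
        rw [ht, ht, ← e1, ← e2]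
      rw [← hth]; exact_mod_cast h1
    obtain ⟨as, has1, has2, has3⟩ := ih2 (fun hg => hneg (GE_mono (by rw [hc']; omega) (key _ hg)))
    have hasI : ∀ a ∈ as, a ∈ I := by
      intro a ha
      rw [has1]
      exact Ideal.mem_sup_right (Ideal.subset_span ha)
    have hAI' : A0 ⊔ Ideal.span {x} ≤ I := sup_le hA0I ((Ideal.span_singleton_le_iff_mem _).2 hxI)
    have hspan : ∀ (P : Type u) [AddCommGroup P] [Module R P] (w : P), x • w ∈ (A0 ⊔ Ideal.span {x}) • (⊤ : Submodule R P) := by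
      intro P _ _ w
      exact Submodule.smul_mem_smul (Ideal.mem_sup_right (Ideal.mem_span_singleton_self x)) trivial
    refine ⟨x :: as, ?_, ⟨?_, ?_⟩, ?_⟩
    · have e1 : ({a | a ∈ x :: as} : Set R) = {x} ∪ {a | a ∈ as} := by
        ext y; simp
      rw [e1, Ideal.span_union, ← sup_assoc]
      exact has1
    · intro z hz hxz
      rw [hA] at hxz ⊢
      have h1 : x • (Submodule.Quotient.mk z : M ⧸ H0 R M) = 0 := by
        rw [← Submodule.Quotient.mk_smul, (Submodule.mem_bot R).1 hxz, Submodule.Quotient.mk_zero]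
      have h2 := (Submodule.Quotient.mk_eq_zero _).1 (hreg.right_eq_zero_of_smul h1)
      rw [← hbot]
      exact ⟨h2, hz⟩
    · refine QQ_transfer _ hπ I as _ hAI' hasI ?_ has2
      rintro z ⟨hz1, hz2⟩
      have h1 := (Submodule.Quotient.mk_eq_zero _).1 (LinearMap.mem_ker.1 hz1)
      obtain ⟨w, _, hw⟩ := (Submodule.mem_smul_pointwise_iff_exists _ _ _).1 h1
      obtain ⟨w, rfl⟩ := Submodule.Quotient.mk_surjective _ w
      have h2 : z - x • w ∈ H0 R M := by
        rw [← Submodule.Quotient.mk_eq_zero, Submodule.Quotient.mk_sub, Submodule.Quotient.mk_smul, hw]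
        exact sub_self _
      have h3 : z - x • w ∈ H0 R M ⊓ I • (⊤ : Submodule R M) :=
        ⟨h2, Submodule.sub_mem _ hz2 (Submodule.smul_mem_smul hxI trivial)⟩
      rw [hbot, Submodule.mem_bot, sub_eq_zero] at h3
      rw [h3]
      exact hspan M w
    · have hQb : QQ (M ⧸ H0 R M) I as (A0 ⊔ Ideal.span {x}) := by
        refine QQ_transfer (M' := N) (Submodule.mkQ (x • (⊤ : Submodule R (M ⧸ H0 R M)))) (Submodule.mkQ_surjective _) I as _ hAI' hasI ?_ has2
        rintro z ⟨hz1, hz2⟩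
        have h1 := (Submodule.Quotient.mk_eq_zero _).1 (LinearMap.mem_ker.1 hz1)
        obtain ⟨w, _, rfl⟩ := (Submodule.mem_smul_pointwise_iff_exists _ _ _).1 h1
        exact hspan _ w
      have hε : ∀ n, ε n = 0 := by
        refine hε2 fun n z hz => ?_
        have h1 := lemD I as _ has1 hQb n ⟨hspan _ z, hz⟩
        obtain ⟨u, hu, w, hw, he⟩ := mem_sup_span_smul h1
        have hu0 : u = 0 := by
          have : u ∈ A0 • (⊤ : Submodule R (M ⧸ H0 R M)) := Submodule.smul_mono le_rfl le_top hu
          rw [hAb] at this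
          exact this
        rw [hu0, zero_add] at he
        rw [hreg he]
        exact hw
      intro n
      have h1 := tele _ _ _ hε1 n
      simp only [hε, Finset.sum_const_zero, add_zero] at h1
      rw [hLt, htn, h1]
      push_cast
      have h2 : (LL M I 0 : ℤ) - hh 0 = LL N I 0 := by rw [hL0, hth]; push_cast; ring
      rw [FF, h2]
      congr 1
      exact Finset.sum_congr rfl fun k _ => has3 k
end
end LCB

end

noncomputable section
namespace LCB
open Finset

/-- the predicted coefficients -/
def GG : ℕ → ℤ → (ℕ → ℕ) → ℕ → ℤ
  | 0, l, _, _ => l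
  | d+1, l, h, i => if i = d+1 then (h 0 : ℤ) else GG d (l - h 0) (hsh h) i

theorem FF_eq (d : ℕ) : ∀ (l : ℤ) (h : ℕ → ℕ) (n : ℕ),
    FF d l h n = ∑ i ∈ range (d+1), GG d l h i * (Nat.multichoose (d-i+1) n : ℤ) := by
  induction d with
  | zero => intro l h n; simp [FF, GG]
  | succ d ih =>
    intro l h n
    rw [FF, sum_range_succ (fun i => GG (d+1) l h i * (Nat.multichoose (d+1-i+1) n : ℤ)), add_comm]
    simp only [ih]
    rw [sum_comm]
    congr 1
    · refine sum_congr rfl fun i hi => ?_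
      have hi' := mem_range.1 hi
      have e : d + 1 - i + 1 = (d - i + 1) + 1 := by omega
      rw [← mul_sum, e, ← mc_sum, GG, if_neg (by omega)]
      push_cast
      rfl
    · simp [GG]

theorem GG_zero (d : ℕ) : ∀ (l : ℤ) (h : ℕ → ℕ) (i : ℕ), 1 ≤ i → i ≤ d →
    (GG d l h i = 0 ↔ if i = d then h 0 = 0 else ∀ j, 1 ≤ j → j ≤ d - i → h j = 0) := by
  induction d with
  | zero => intro l h i h1 h2; omega
  | succ d ih =>
    intro l h i h1 h2
    rw [GG]
    by_cases hi : i = d+1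
    · rw [if_pos hi, if_pos hi]; exact Int.natCast_eq_zero
    · rw [if_neg hi, if_neg hi, ih _ _ _ h1 (by omega)]
      by_cases hd : i = d
      · subst hd
        rw [if_pos rfl]
        constructor
        · intro h0 j hj1 hj2
          have : j = 1 := by omega
          subst this; simpa [hsh] using h0
        · intro h0
          simpa [hsh] using h0 1 le_rfl (by omega)
      · rw [if_neg hd]
        constructor
        · intro h0 j hj1 hj2
          by_cases hj : j = d + 1 - i
          · have := h0 (j-1) (by omega) (by omega)
            simp only [hsh, if_neg (show j - 1 ≠ 0 by omega)] at this
            have e : j - 1 + 1 = j := by omega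
            rw [e] at this; omega
          · have := h0 j hj1 (by omega)
            simp only [hsh, if_neg (show j ≠ 0 by omega)] at this
            omega
        · intro h0 j hj1 hj2
          simp only [hsh, if_neg (show j ≠ 0 by omega)]
          rw [h0 j hj1 (by omega), h0 (j+1) (by omega) (by omega)]

theorem uniq (d : ℕ) : ∀ (c : ℕ → ℤ) (n0 : ℕ),
    (∀ n, n0 ≤ n → ∑ i ∈ range (d+1), c i * (Nat.multichoose (d-i+1) n : ℤ) = 0) → ∀ i ≤ d, c i = 0 := by
  induction d with
  | zero =>
    intro c n0 h i hi
    have := h n0 le_rfl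
    have hi0 : i = 0 := by omega
    subst hi0
    simpa using this
  | succ d ih =>
    intro c n0 h
    have h1 : ∀ i ≤ d, c i = 0 := by
      refine ih c (n0+1) fun n hn => ?_
      obtain ⟨m, rfl⟩ : ∃ m, n = m+1 := ⟨n-1, by omega⟩
      have a := h (m+1) (by omega)
      have b := h m (by omega)
      rw [sum_range_succ] at a b
      simp only [Nat.sub_self, zero_add, Nat.multichoose_one, Nat.cast_one, mul_one] at a b
      have : ∀ i ∈ range (d+1), c i * (Nat.multichoose (d+1-i+1) (m+1) : ℤ) =
          c i * (Nat.multichoose (d-i+1) (m+1) : ℤ) + c i * (Nat.multichoose (d+1-i+1) m : ℤ) := by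
        intro i hi
        have hi' := mem_range.1 hi
        have e : d + 1 - i = d - i + 1 := by omega
        rw [e, Nat.multichoose_succ_succ]; push_cast; ring
      rw [sum_congr rfl this, sum_add_distrib] at a
      linarith
    intro i hi
    by_cases hid : i = d + 1
    · subst hid
      have a := h n0 le_rfl
      rw [sum_range_succ, sum_eq_zero (fun i hi => by rw [h1 i (by have := mem_range.1 hi; omega), zero_mul])] at a
      simpa using a
    · exact h1 i (by omega)

theorem mc_mono {k d : ℕ} (h : k ≤ d) (n : ℕ) : Nat.multichoose k n ≤ Nat.multichoose d n := by
  rw [Nat.multichoose_eq, Nat.multichoose_eq]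
  exact Nat.choose_le_choose _ (by omega)

theorem mc_ratio (d n : ℕ) : Nat.multichoose (d+2) n * (d+1) = (n+d+1) * Nat.multichoose (d+1) n := by
  rw [Nat.multichoose_eq, Nat.multichoose_eq]
  have e1 : (d + 2 + n - 1).choose n = (n+d+1).choose (d+1) := by
    rw [← Nat.choose_symm_of_eq_add (n := n+d+1) (a := n) (b := d+1) (by omega)]
    congr 1; omega
  have e2 : (d + 1 + n - 1).choose n = (n+d).choose d := by
    rw [← Nat.choose_symm_of_eq_add (n := n+d) (a := n) (b := d) (by omega)]
    congr 1; omega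
  rw [e1, e2, ← Nat.add_one_mul_choose_eq]

theorem not_GE (d : ℕ) (L : ℕ → ℕ) (c : ℕ → ℤ) (n0 : ℕ)
    (h : ∀ n, n0 ≤ n → (L n : ℤ) = ∑ i ∈ range (d+1+1), c i * (Nat.multichoose (d+1-i+1) n : ℤ)) :
    ¬ GE (d+1) L (c 0 + 1) := by
  rintro ⟨K, hK⟩
  obtain ⟨S, hS⟩ : ∃ S : ℕ, ∀ n, n0 ≤ n → (Nat.multichoose (d+2) n : ℤ) ≤ S * (Nat.multichoose (d+1) n : ℤ) := by
    refine ⟨∑ i ∈ range (d+1), (c (i+1)).natAbs + K, fun n hn => ?_⟩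
    have a := hK n
    rw [h n hn, sum_range_succ'] at a
    simp only [Nat.sub_zero] at a
    have : ∑ i ∈ range (d+1), c (i+1) * (Nat.multichoose (d+1-(i+1)+1) n : ℤ) ≤
        ∑ i ∈ range (d+1), ((c (i+1)).natAbs : ℤ) * (Nat.multichoose (d+1) n : ℤ) := by
      refine sum_le_sum fun i hi => ?_
      have hm : (Nat.multichoose (d+1-(i+1)+1) n : ℤ) ≤ Nat.multichoose (d+1) n := by
        exact_mod_cast mc_mono (by omega) n
      have hc : c (i+1) ≤ ((c (i+1)).natAbs : ℤ) := Int.le_natAbs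
      calc _ ≤ ((c (i+1)).natAbs : ℤ) * (Nat.multichoose (d+1-(i+1)+1) n : ℤ) := mul_le_mul_of_nonneg_right hc (by positivity)
        _ ≤ _ := mul_le_mul_of_nonneg_left hm (by positivity)
    rw [← sum_mul] at this
    rw [Nat.cast_add, Nat.cast_sum, add_mul]
    rw [show d + 1 + 1 = d + 2 from rfl] at a
    linarith
  set n := n0 + S * (d+1)
  have a := hS n (by omega)
  have b : Nat.multichoose (d+2) n ≤ S * Nat.multichoose (d+1) n := by exact_mod_cast a
  have r := mc_ratio d n
  have p := mc_pos d n
  have h3 : (n+d+1) * Nat.multichoose (d+1) n ≤ (S * (d+1)) * Nat.multichoose (d+1) n := by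
    rw [← r]; nlinarith
  have := Nat.le_of_mul_le_mul_right h3 p
  omega
end LCB

end

noncomputable section
namespace LCB
open IsLocalRing

theorem hM_of_unmixed (R : Type u) [CommRing R] [IsLocalRing R] [IsNoetherianRing R] (hunm : Unmixed R)
    (d : ℕ) (hd0 : 0 < d) (hd : ringKrullDim R = ((d : ℕ∞) : WithBot ℕ∞)) (x : R)
    (hx : ∀ r ∈ maximalIdeal R, r • x = 0) : x = 0 := by
  by_contra hne
  set J := maximalIdeal R with hJ
  have hJmax : J.IsMaximal := maximalIdeal.isMaximal R
  let φ : AdicCompletion J R →+* R ⧸ J := (AdicCompletion.evalOneₐ J).toRingHom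
  have hφ : Function.Surjective φ := AdicCompletion.evalOneₐ_surjective J
  let : Field (R ⧸ J) := Ideal.Quotient.field J
  have hmax : (RingHom.ker φ).IsMaximal := RingHom.ker_isMaximal_of_surjective φ hφ
  set xh : AdicCompletion J R := AdicCompletion.of J R x with hxh
  have hxh0 : xh ≠ 0 := by
    intro h0
    have : Function.Injective (AdicCompletion.of J R) := AdicCompletion.of_injective J R
    exact hne (this (h0.trans (map_zero _).symm))
  have hkill : ∀ y ∈ RingHom.ker φ, y * xh = 0 := by
    intro y hy
    obtain ⟨y, rfl⟩ := AdicCompletion.mk_surjective J R y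
    refine AdicCompletion.ext_evalₐ fun n => ?_
    rw [map_mul, map_zero, hxh, AdicCompletion.evalₐ_of, AdicCompletion.evalₐ_mk, ← map_mul]
    rcases Nat.eq_zero_or_pos n with rfl | hn
    · exact Ideal.Quotient.eq_zero_iff_mem.2 (by simp)
    · have h1 : y.val 1 ∈ J := by
        have h2 : AdicCompletion.evalOneₐ J (AdicCompletion.mk J R y) = 0 := hy
        rw [← AdicCompletion.factorₐ_evalₐ_one, AdicCompletion.evalₐ_mk, Ideal.Quotient.factor_mk] at h2
        exact Ideal.Quotient.eq_zero_iff_mem.1 h2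
      have h3 : y.val n ∈ J := by
        have h4 := y.property (show 1 ≤ n from hn)
        rw [SModEq.sub_mem] at h4
        have h5 : y.val 1 - y.val n ∈ J := by simpa using h4
        have := Ideal.sub_mem _ h1 h5
        simpa using this
      have := hx _ h3
      rw [smul_eq_mul] at this
      rw [this, map_zero]
  have hass : RingHom.ker φ ∈ associatedPrimes (AdicCompletion J R) (AdicCompletion J R) := by
    refine ⟨hmax.isPrime, xh, ?_⟩
    have heq : RingHom.ker φ = (⊥ : Submodule (AdicCompletion J R) (AdicCompletion J R)).colon {xh} := by
      refine hmax.eq_of_le ?_ ?_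
      · intro h
        have : (1 : AdicCompletion J R) ∈ (⊥ : Submodule (AdicCompletion J R) (AdicCompletion J R)).colon {xh} := by
          rw [h]; trivial
        rw [Submodule.mem_colon_singleton, one_smul] at this
        exact hxh0 this
      · intro y hy
        rw [Submodule.mem_colon_singleton]
        exact hkill y hy
    rw [← heq]
    exact hmax.isPrime.radical.symm
  have h1 := hunm _ hass
  let := hmax
  let : Field (AdicCompletion J R ⧸ RingHom.ker φ) := Ideal.Quotient.field _
  rw [ringKrullDim_eq_zero_of_field, hd] at h1
  have : (0:ℕ) = d := by exact_mod_cast h1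
  omega
end LCB

end

/-- In an unmixed generalized Cohen–Macaulay local ring of dimension `d > 0` with a standard
parameter ideal `I`, for each `1 ≤ i ≤ d`: `depth R ≥ d - i + 1` iff `eᵢ(I) = 0`. -/
theorem stmt_11 (R : Type u) [CommRing R] [IsLocalRing R] [IsNoetherianRing R]
    (hunm : Unmixed R)
    (d : ℕ) (hd0 : 0 < d) (hd : ringKrullDim R = ((d : ℕ∞) : WithBot ℕ∞))
    (h : ℕ → ℕ)
    (hh : ∀ i, i < d → mlen R (lcoh R i R) = ((h i : ℕ∞) : WithBot ℕ∞))
    (I : Ideal R) (hpar : IsParameterIdeal R I d R)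
    (e : ℕ → ℤ) (he : HasHilbCoeffs R I R d e)
    (l1 : ℕ) (hl1 : mlen R (R ⧸ (I • (⊤ : Submodule R R))) = ((l1 : ℕ∞) : WithBot ℕ∞))
    (hstd : (l1 : ℤ) - e 0 = ∑ i ∈ Finset.range d, ((d - 1).choose i : ℤ) * (h i : ℤ)) :
    ∀ i, 1 ≤ i → i ≤ d →
      (((d - i + 1 : ℕ) : ℕ∞) ≤ mdepth R R ↔ e i = 0) := by
  obtain ⟨⟨b, hb⟩, -⟩ := hpar
  obtain ⟨ℓ, hℓ, hev⟩ := he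
  obtain ⟨n0, hn0⟩ := eventually_atTop.1 hev
  have hHl : ∀ i < d, LCB.Hl (maximalIdeal R) i R = h i := by
    intro i hi
    have := hh i hi
    rw [LCB.mlen_lcoh] at this
    exact WithBot.coe_injective this
  have hmlen : ∀ (V : Submodule R R) (k : ℕ), mlen R (R ⧸ V) = ((k : ℕ∞) : WithBot ℕ∞) → Module.length R (R ⧸ V) = k := by
    intro V k hk
    rw [mlen, ← Module.coe_length] at hk
    exact WithBot.coe_injective hk
  have hfin : Module.length R (R ⧸ (I • (⊤ : Submodule R R))) ≠ ⊤ := by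
    rw [hmlen _ _ hl1]; exact ENat.natCast_ne_top _
  have hLL : ∀ n, LCB.LL R I n = ℓ (n+1) := by
    intro n
    rw [LCB.LL, hmlen _ _ (hℓ (n+1))]; rfl
  have hL0 : LCB.LL R I 0 = l1 := by
    have h1 := LCB.LL_coe (M := R) I hfin 0
    rw [zero_add, pow_one, hmlen _ _ hl1] at h1
    exact_mod_cast h1
  have hpoly : ∀ n, n0 ≤ n → (LCB.LL R I n : ℤ) =
      ∑ i ∈ Finset.range (d+1), ((-1)^i * e i) * (Nat.multichoose (d-i+1) n : ℤ) := by
    intro n hn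
    rw [hLL, hn0 (n+1) (by omega), hsPoly]
    refine Finset.sum_congr rfl fun i hi => ?_
    have hi' := Finset.mem_range.1 hi
    rw [Nat.multichoose_eq]
    have e1 : d - i + 1 + n - 1 = n + 1 + d - 1 - i := by omega
    rw [e1, ← Nat.choose_symm_of_eq_add (n := n + 1 + d - 1 - i) (a := n) (b := d - i) (by omega)]
  have hw : (LCB.LL R I 0 : ℤ) - LCB.wsum d h = e 0 := by
    rw [hL0, LCB.wsum, ← hstd]; ring
  have hnot : ¬ LCB.GE d (LCB.LL R I) (e 0 + 1) := by
    obtain ⟨d', rfl⟩ : ∃ d', d = d' + 1 := ⟨d - 1, by omega⟩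
    have := LCB.not_GE d' (LCB.LL R I) (fun i => (-1)^i * e i) n0 hpoly
    simpa using this
  have hFF := (LCB.main_ind d R ⊥ I b h (by simp) (by rw [bot_sup_eq]; exact hb) hfin
    (fun i hi => (hHl i hi).le)).2 (by rw [hw]; exact hnot)
  obtain ⟨_, _, _, hFF⟩ := hFF
  have hcoef : ∀ i ≤ d, (-1)^i * e i = LCB.GG d (LCB.LL R I 0) h i := by
    intro i hi
    rw [← sub_eq_zero]
    refine LCB.uniq d (fun i => (-1)^i * e i - LCB.GG d (LCB.LL R I 0) h i) n0 (fun n hn => ?_) i hi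
    simp only [sub_mul, Finset.sum_sub_distrib]
    rw [← hpoly n hn, ← LCB.FF_eq, hFF n, sub_self]
  have h0 : h 0 = 0 := by
    obtain ⟨y, hy, hreg⟩ := LCB.exists_reg_elt R (LCB.hM_of_unmixed R hunm d hd0 hd)
    have h1 := LCB.Hl0_of_reg (maximalIdeal R) y hy hreg
    rw [hHl 0 hd0] at h1
    exact_mod_cast h1
  intro i hi1 hid
  have h1 : e i = 0 ↔ LCB.GG d (LCB.LL R I 0) h i = 0 := by
    rw [← hcoef i hid]
    simp
  rw [h1, LCB.GG_zero d _ _ i hi1 hid, LCB.le_mdepth_iff]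
  have h2 : (∀ j < d - i + 1, LCB.Hl (maximalIdeal R) j R = 0) ↔ ∀ j < d - i + 1, h j = 0 := by
    refine forall₂_congr fun j hj => ?_
    rw [hHl j (by omega)]
    exact Nat.cast_eq_zero
  rw [h2]
  split_ifs with hc
  · subst hc
    exact ⟨fun _ => h0, fun _ j hj => by have : j = 0 := by omega
                                         rw [this]; exact h0⟩
  · constructor
    · intro H j _ hj
      exact H j (by omega)
    · intro H j hj
      rcases Nat.eq_zero_or_pos j with rfl | hj0
      · exact h0
      · exact H j hj0 (by omega)
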